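/- arXiv:1804.11033 — 7 statements merged into one kernel-verified Lean document; each statement's English description precedes it below -/
import Mathlib

section
/- One has cos²(π/3) + cos²(π/5) = cos²(π/10). Consequently K_{π/5}((3,5,10)) = 0 and K_{π/5}((3,3,5,5)) = 0; that is, at side length a = π/5 both vertex patterns (3,5,10) and (3,3,5,5) have total angle exactly 2π, so their critical side-lengths both equal π/5. -/
/-- The angle defect `K_a(p) = 2π − Σ_{f ∈ p} 2·arcsin(cos(π/f)/cos(a/2))` of a
vertex pattern given as a list. -/
noncomputable def K (p : List ℕ) (a : ℝ) : ℝ :=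
  2 * Real.pi -
    (p.map (fun f => 2 * Real.arcsin (Real.cos (Real.pi / (f : ℝ)) / Real.cos (a / 2)))).sum

/-- The critical side-length `a_c(p) = max{a ∈ [0, 2π/f_N] : K_a(p) ≥ 0}` of a
vertex pattern, where `f_N` is the last (largest) entry. -/
noncomputable def ac (p : List ℕ) : ℝ :=
  sSup {a : ℝ | a ∈ Set.Icc 0 (2 * Real.pi / (p.getLast! : ℝ)) ∧ 0 ≤ K p a}

theorem aux_cos_sq :
    Real.cos (Real.pi / 3) ^ 2 + Real.cos (Real.pi / 5) ^ 2 = Real.cos (Real.pi / 10) ^ 2 := by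
  have h1 := Real.cos_sq (Real.pi / 10)
  rw [show 2 * (Real.pi / 10) = Real.pi / 5 by ring] at h1
  have h2 := Real.quadratic_root_cos_pi_div_five
  rw [h1, Real.cos_pi_div_three]
  nlinarith [h2]

theorem aux_cos_pos : 0 < Real.cos (Real.pi / 10) := by
  apply Real.cos_pos_of_mem_Ioo
  constructor <;> linarith [Real.pi_pos]

theorem aux_cos5_pos : 0 < Real.cos (Real.pi / 5) := by
  apply Real.cos_pos_of_mem_Ioo
  constructor <;> linarith [Real.pi_pos]

theorem aux_arcsin_add :
    Real.arcsin (Real.cos (Real.pi / 3) / Real.cos (Real.pi / 10)) +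
      Real.arcsin (Real.cos (Real.pi / 5) / Real.cos (Real.pi / 10)) = Real.pi / 2 := by
  have hp := aux_cos_pos
  have h5 := aux_cos5_pos
  have h := aux_cos_sq
  have h3 : 0 ≤ Real.cos (Real.pi / 3) / Real.cos (Real.pi / 10) := by
    rw [Real.cos_pi_div_three]; positivity
  have e : Real.cos (Real.pi / 5) / Real.cos (Real.pi / 10) =
      √(1 - (Real.cos (Real.pi / 3) / Real.cos (Real.pi / 10)) ^ 2) := by
    symm
    rw [Real.sqrt_eq_iff_mul_self_eq_of_pos (by positivity)]
    field_simp
    linarith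
  rw [e, ← Real.arccos_eq_arcsin h3, Real.arccos]
  ring

theorem aux_K1 : K [3, 5, 10] (Real.pi / 5) = 0 := by
  have h := aux_arcsin_add
  have hp := aux_cos_pos
  simp only [K, List.bind_eq_flatMap, List.pure_def, List.flatMap_cons, List.flatMap_nil,
    List.cons_append, List.nil_append, List.map_cons, List.map_nil, List.sum_cons, List.sum_nil, Nat.cast_ofNat]
  rw [show Real.pi / 5 / 2 = Real.pi / 10 by ring, div_self hp.ne', Real.arcsin_one]
  linarith

theorem aux_K2 : K [3, 3, 5, 5] (Real.pi / 5) = 0 := by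
  have h := aux_arcsin_add
  simp only [K, List.bind_eq_flatMap, List.pure_def, List.flatMap_cons, List.flatMap_nil,
    List.cons_append, List.nil_append, List.map_cons, List.map_nil, List.sum_cons, List.sum_nil, Nat.cast_ofNat]
  rw [show Real.pi / 5 / 2 = Real.pi / 10 by ring]
  linarith

theorem aux_K2_neg (a : ℝ) (h1 : Real.pi / 5 < a) (h2 : a ≤ 2 * Real.pi / 5) :
    K [3, 3, 5, 5] a < 0 := by
  have h := aux_arcsin_add
  have hpi := Real.pi_pos
  have h5 := aux_cos5_pos
  have hlt : Real.cos (a / 2) < Real.cos (Real.pi / 10) :=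
    Real.cos_lt_cos_of_nonneg_of_le_pi (by linarith) (by linarith) (by linarith)
  have hle : Real.cos (Real.pi / 5) ≤ Real.cos (a / 2) :=
    Real.cos_le_cos_of_nonneg_of_le_pi (by linarith) (by linarith) (by linarith)
  have h35 : Real.cos (Real.pi / 3) ≤ Real.cos (Real.pi / 5) :=
    Real.cos_le_cos_of_nonneg_of_le_pi (by linarith) (by linarith) (by linarith)
  have h3 : 0 < Real.cos (Real.pi / 3) := by rw [Real.cos_pi_div_three]; norm_num
  have hx : 0 < Real.cos (a / 2) := by linarith
  have key : ∀ c : ℝ, 0 < c → c ≤ Real.cos (a / 2) →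
      Real.arcsin (c / Real.cos (Real.pi / 10)) < Real.arcsin (c / Real.cos (a / 2)) := by
    intro c hc hcx
    apply Real.arcsin_lt_arcsin
    · have : 0 < c / Real.cos (Real.pi / 10) := div_pos hc (by linarith)
      linarith
    · exact div_lt_div_of_pos_left hc hx hlt
    · exact (div_le_one hx).2 hcx
  have k3 := key _ h3 (h35.trans hle)
  have k5 := key _ h5 hle
  simp only [K, List.bind_eq_flatMap, List.pure_def, List.flatMap_cons, List.flatMap_nil,
    List.cons_append, List.nil_append, List.map_cons, List.map_nil, List.sum_cons, List.sum_nil, Nat.cast_ofNat]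
  linarith

/-- One has cos²(π/3) + cos²(π/5) = cos²(π/10).  Consequently at side length π/5
both patterns (3,5,10) and (3,3,5,5) have angle defect zero, so their critical
side-lengths both equal π/5. -/
theorem stmt8 :
    Real.cos (Real.pi / 3) ^ 2 + Real.cos (Real.pi / 5) ^ 2 = Real.cos (Real.pi / 10) ^ 2 ∧
    K [3, 5, 10] (Real.pi / 5) = 0 ∧ K [3, 3, 5, 5] (Real.pi / 5) = 0 ∧
    ac [3, 5, 10] = Real.pi / 5 ∧ ac [3, 3, 5, 5] = Real.pi / 5 := by
  have hpi := Real.pi_pos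
  refine ⟨aux_cos_sq, aux_K1, aux_K2, ?_, ?_⟩
  · apply IsGreatest.csSup_eq
    have e : 2 * Real.pi / (([3, 5, 10] : List ℕ).getLast! : ℝ) = Real.pi / 5 := by
      simp [List.getLast!]; ring
    rw [e]
    exact ⟨⟨⟨by positivity, le_rfl⟩, aux_K1.ge⟩, fun a ha => ha.1.2⟩
  · apply IsGreatest.csSup_eq
    have e : 2 * Real.pi / (([3, 3, 5, 5] : List ℕ).getLast! : ℝ) = 2 * Real.pi / 5 := by
      simp [List.getLast!]
    rw [e]
    refine ⟨⟨⟨by positivity, by linarith⟩, aux_K2.ge⟩, fun a ha => ?_⟩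
    by_contra hc
    exact absurd ha.2 (not_le.2 (aux_K2_neg a (not_le.1 hc) ha.1.2))
end

section
/- The critical side-length of the pattern (4,4,4) is a_c((4,4,4)) = 2·arccos(√6/3), i.e. 6·arcsin(cos(π/4)/(√6/3)) = 2π. Moreover K at this side length also vanishes for the pattern (3,4,5): 2·arcsin(√6/4) + 2·arcsin((√5+1)·√6/8) = 4π/3, equivalently sin(π/3 + arcsin(√6/4)) = (√5+1)·√6/8. Consequently a_c((3,4,5)) = a_c((4,4,4)) = 2·arccos(√6/3). -/
lemma aux_K (x y z : ℕ) (a : ℝ) : K [x, y, z] a = 2 * Real.pi -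
    (2 * Real.arcsin (Real.cos (Real.pi / (x : ℝ)) / Real.cos (a / 2)) +
      (2 * Real.arcsin (Real.cos (Real.pi / (y : ℝ)) / Real.cos (a / 2)) +
        2 * Real.arcsin (Real.cos (Real.pi / (z : ℝ)) / Real.cos (a / 2)))) := by
  simp [K]

lemma aux_sqrt6_pos : (0:ℝ) < √6 := by positivity

lemma aux_cos_arccos : Real.cos (Real.arccos (√6 / 3)) = √6 / 3 := by
  have h6 : √6 ^ 2 = (6:ℝ) := Real.sq_sqrt (by norm_num)
  have := aux_sqrt6_pos
  exact Real.cos_arccos (by linarith) (by nlinarith)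

lemma aux_arcsin_sqrt3 : Real.arcsin (√3 / 2) = Real.pi / 3 := by
  have := Real.pi_pos
  rw [← Real.sin_pi_div_three, Real.arcsin_sin (by linarith) (by linarith)]

lemma aux_four : Real.cos (Real.pi / 4) / (√6 / 3) = √3 / 2 := by
  rw [Real.cos_pi_div_four]
  have h : √6 = √2 * √3 := by rw [← Real.sqrt_mul (by norm_num)]; norm_num
  have h3 : √3 ^ 2 = (3:ℝ) := Real.sq_sqrt (by norm_num)
  rw [h]
  field_simp
  linarith

lemma aux_three : Real.cos (Real.pi / 3) / (√6 / 3) = √6 / 4 := by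
  rw [Real.cos_pi_div_three]
  have h6 : √6 ^ 2 = (6:ℝ) := Real.sq_sqrt (by norm_num)
  field_simp
  linarith

lemma aux_five : Real.cos (Real.pi / 5) / (√6 / 3) = (√5 + 1) * √6 / 8 := by
  rw [Real.cos_pi_div_five]
  have h6 : √6 ^ 2 = (6:ℝ) := Real.sq_sqrt (by norm_num)
  field_simp
  rw [h6]
  ring

lemma aux_sin : Real.sin (Real.pi / 3 + Real.arcsin (√6 / 4)) = (√5 + 1) * √6 / 8 := by
  have h6 : √6 ^ 2 = (6:ℝ) := Real.sq_sqrt (by norm_num)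
  have h0 := aux_sqrt6_pos
  have hc : √(1 - (√6 / 4) ^ 2) = √5 * √2 / 4 := by
    rw [Real.sqrt_eq_iff_mul_self_eq (by nlinarith) (by positivity)]
    have h5 : √5 ^ 2 = (5:ℝ) := Real.sq_sqrt (by norm_num)
    have h2 : √2 ^ 2 = (2:ℝ) := Real.sq_sqrt (by norm_num)
    have : √5 * √2 / 4 * (√5 * √2 / 4) = √5 ^ 2 * √2 ^ 2 / 16 := by ring
    rw [this, div_pow, h5, h2, h6]
    norm_num
  have h : √6 = √2 * √3 := by rw [← Real.sqrt_mul (by norm_num)]; norm_num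
  rw [Real.sin_add, Real.sin_arcsin (by linarith) (by nlinarith), Real.cos_arcsin, hc,
    Real.sin_pi_div_three, Real.cos_pi_div_three, h]
  ring

lemma aux_sum : Real.arcsin (√6 / 4) + Real.arcsin ((√5 + 1) * √6 / 8) = 2 * Real.pi / 3 := by
  have h6 : √6 ^ 2 = (6:ℝ) := Real.sq_sqrt (by norm_num)
  have h0 := aux_sqrt6_pos
  have hpi := Real.pi_pos
  have hle : Real.arcsin (√6 / 4) ≤ Real.pi / 2 := Real.arcsin_le_pi_div_two _
  have hge : Real.pi / 6 ≤ Real.arcsin (√6 / 4) := by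
    rw [Real.le_arcsin_iff_sin_le' ⟨by linarith, by linarith⟩, Real.sin_pi_div_six]
    nlinarith
  rw [← aux_sin, ← Real.sin_pi_sub, Real.arcsin_sin (by linarith) (by linarith)]
  ring

lemma aux_ac (p : List ℕ) (n : ℕ) (hn : p.getLast! = n) (h4 : 4 ≤ n) (h5 : n ≤ 5)
    (h0 : 0 ≤ K p (2 * Real.arccos (√6 / 3)))
    (hlt : ∀ a, 0 < Real.cos (a / 2) → Real.cos (a / 2) < √6 / 3 → K p a < 0) :
    ac p = 2 * Real.arccos (√6 / 3) := by
  have hpi := Real.pi_pos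
  have hn4 : (4:ℝ) ≤ n := by exact_mod_cast h4
  have hn5 : (n:ℝ) ≤ 5 := by exact_mod_cast h5
  have harc : Real.arccos (√6 / 3) ≤ Real.pi / 5 := by
    by_contra hcon
    push Not at hcon
    have h := Real.cos_lt_cos_of_nonneg_of_le_pi (by positivity) (Real.arccos_le_pi _) hcon
    rw [aux_cos_arccos, Real.cos_pi_div_five] at h
    have h6 : (2.448:ℝ) < √6 := Real.lt_sqrt_of_sq_lt (by norm_num)
    have h5 : √5 < (2.24:ℝ) := (Real.sqrt_lt' (by norm_num)).2 (by norm_num)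
    linarith
  apply IsGreatest.csSup_eq
  refine ⟨⟨⟨by linarith [Real.arccos_nonneg (√6 / 3)], ?_⟩, h0⟩, ?_⟩
  · rw [hn, le_div_iff₀ (by linarith)]
    nlinarith [Real.arccos_nonneg (√6 / 3)]
  · rintro a ⟨⟨ha0, ha⟩, hK⟩
    rw [hn, le_div_iff₀ (by linarith)] at ha
    by_contra hcon
    push Not at hcon
    have ha4 : a * 4 ≤ 2 * Real.pi := by nlinarith
    refine absurd hK (not_le.2 (hlt a ?_ ?_))
    · exact Real.cos_pos_of_mem_Ioo ⟨by linarith, by linarith⟩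
    · rw [← aux_cos_arccos]
      exact Real.cos_lt_cos_of_nonneg_of_le_pi (Real.arccos_nonneg _) (by linarith) (by linarith)

lemma aux_lt_four {c : ℝ} (hc : 0 < c) (h : c < √6 / 3) :
    Real.pi / 3 < Real.arcsin (Real.cos (Real.pi / 4) / c) := by
  have hpi := Real.pi_pos
  rw [Real.lt_arcsin_iff_sin_lt' ⟨by linarith, by linarith⟩, Real.sin_pi_div_three, ← aux_four]
  have : 0 < Real.cos (Real.pi / 4) := by rw [Real.cos_pi_div_four]; positivity
  exact div_lt_div_of_pos_left this hc h

lemma aux_le {c x : ℝ} (hx : 0 ≤ x) (hc : 0 < c) (h : c < √6 / 3) :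
    Real.arcsin (x / (√6 / 3)) ≤ Real.arcsin (x / c) :=
  Real.monotone_arcsin (div_le_div_of_nonneg_left hx hc h.le)

/-- a_c((4,4,4)) = 2·arccos(√6/3), i.e. 6·arcsin(cos(π/4)/(√6/3)) = 2π.  Moreover K
at this side length also vanishes for (3,4,5):
2·arcsin(√6/4) + 2·arcsin((√5+1)√6/8) = 4π/3, equivalently
sin(π/3 + arcsin(√6/4)) = (√5+1)√6/8.  Consequently
a_c((3,4,5)) = a_c((4,4,4)) = 2·arccos(√6/3). -/
theorem stmt9 :
    ac [4, 4, 4] = 2 * Real.arccos (Real.sqrt 6 / 3) ∧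
    6 * Real.arcsin (Real.cos (Real.pi / 4) / (Real.sqrt 6 / 3)) = 2 * Real.pi ∧
    2 * Real.arcsin (Real.sqrt 6 / 4) +
      2 * Real.arcsin ((Real.sqrt 5 + 1) * Real.sqrt 6 / 8) = 4 * Real.pi / 3 ∧
    Real.sin (Real.pi / 3 + Real.arcsin (Real.sqrt 6 / 4)) =
      (Real.sqrt 5 + 1) * Real.sqrt 6 / 8 ∧
    ac [3, 4, 5] = 2 * Real.arccos (Real.sqrt 6 / 3) := by
  have hhalf : 2 * Real.arccos (√6 / 3) / 2 = Real.arccos (√6 / 3) := by ring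
  have hs := aux_sum
  refine ⟨?_, ?_, ?_, aux_sin, ?_⟩
  · refine aux_ac _ 4 rfl (by norm_num) (by norm_num) ?_ ?_
    · rw [aux_K]
      simp only [Nat.cast_ofNat]
      rw [hhalf, aux_cos_arccos, aux_four, aux_arcsin_sqrt3]
      linarith
    · intro a h1 h2
      rw [aux_K]
      simp only [Nat.cast_ofNat]
      linarith [aux_lt_four h1 h2]
  · rw [aux_four, aux_arcsin_sqrt3]
    ring
  · linarith
  · refine aux_ac _ 5 rfl (by norm_num) (by norm_num) ?_ ?_
    · rw [aux_K]
      simp only [Nat.cast_ofNat]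
      rw [hhalf, aux_cos_arccos, aux_four, aux_arcsin_sqrt3, aux_three, aux_five]
      linarith
    · intro a h1 h2
      rw [aux_K]
      simp only [Nat.cast_ofNat]
      have e3 := aux_le (x := Real.cos (Real.pi / 3))
        (by rw [Real.cos_pi_div_three]; positivity) h1 h2
      have e5 := aux_le (x := Real.cos (Real.pi / 5))
        (by rw [Real.cos_pi_div_five]; positivity) h1 h2
      rw [aux_three] at e3
      rw [aux_five] at e5
      linarith [aux_lt_four h1 h2]
end

section
/- At side length a = arctan 2 the three vertex patterns (3,3,3,3,3), (3,3,3,5) and (3,5,5) all have angle defect zero: K_{arctan 2}((3,3,3,3,3)) = K_{arctan 2}((3,3,3,5)) = K_{arctan 2}((3,5,5)) = 0. Equivalently, cos(arctan(2)/2) = 1/(2·sin(π/5)), and the critical side-lengths of these three patterns all equal arctan 2. -/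
open Real in
lemma aux_cos : cos (arctan 2 / 2) = 1 / (2 * sin (π / 5)) := by
  have hs : 0 < sin (π / 5) := sin_pos_of_pos_of_lt_pi (by positivity) (by linarith [pi_pos])
  have h0 : 0 < arctan 2 := arctan_pos.2 (by norm_num)
  have h1 : arctan 2 < π / 2 := arctan_lt_pi_div_two 2
  have hc : 0 < cos (arctan 2 / 2) := cos_pos_of_mem_Ioo ⟨by linarith, by linarith⟩
  have h5 : √5 ^ 2 = (5:ℝ) := sq_sqrt (by norm_num)
  have h5p : 0 < √(5:ℝ) := sqrt_pos.2 (by norm_num)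
  have hA : cos (arctan 2) = √5 / 5 := by
    rw [cos_arctan, show (1 + 2 ^ 2 : ℝ) = 5 by norm_num]
    field_simp
    linarith
  have hB : cos (arctan 2 / 2) ^ 2 = (1 + √5 / 5) / 2 := by
    rw [cos_sq, show 2 * (arctan 2 / 2) = arctan 2 by ring, hA]; ring
  have hC : sin (π / 5) ^ 2 = (5 - √5) / 8 := by
    rw [sin_sq, cos_pi_div_five]; nlinarith
  rw [eq_div_iff (by positivity)]
  have : (cos (arctan 2 / 2) * (2 * sin (π / 5))) ^ 2 = 1 ^ 2 := by
    rw [mul_pow, mul_pow, hB, hC]; nlinarith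
  exact (sq_eq_sq₀ (by positivity) (by norm_num)).1 this

open Real in
lemma aux_three_s10 : arcsin (cos (π / 3) / cos (arctan 2 / 2)) = π / 5 := by
  have hs : 0 < sin (π / 5) := sin_pos_of_pos_of_lt_pi (by positivity) (by linarith [pi_pos])
  rw [aux_cos, cos_pi_div_three,
    show (1 / 2 / (1 / (2 * sin (π / 5))) : ℝ) = sin (π / 5) by field_simp]
  exact arcsin_sin (by linarith [pi_pos]) (by linarith [pi_pos])

open Real in
lemma aux_five_s10 : arcsin (cos (π / 5) / cos (arctan 2 / 2)) = 2 * (π / 5) := by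
  have hs : 0 < sin (π / 5) := sin_pos_of_pos_of_lt_pi (by positivity) (by linarith [pi_pos])
  rw [aux_cos, show (cos (π / 5) / (1 / (2 * sin (π / 5))) : ℝ) = sin (2 * (π / 5)) by
    rw [sin_two_mul]; field_simp]
  exact arcsin_sin (by linarith [pi_pos]) (by linarith [pi_pos])

open Real in
lemma aux_le_s10 : arctan 2 ≤ 2 * π / 5 := by
  have hs : 0 < sin (π / 5) := sin_pos_of_pos_of_lt_pi (by positivity) (by linarith [pi_pos])
  have h0 : 0 < arctan 2 := arctan_pos.2 (by norm_num)
  have h1 : arctan 2 < π / 2 := arctan_lt_pi_div_two 2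
  have : cos (π / 5) ≤ cos (arctan 2 / 2) := by
    rw [aux_cos, le_div_iff₀ (by positivity)]
    have := sin_le_one (2 * (π / 5))
    rw [sin_two_mul] at this; linarith
  have := (strictAntiOn_cos.le_iff_ge ⟨by positivity, by linarith [pi_pos]⟩
    ⟨by positivity, by linarith [pi_pos]⟩).1 this
  linarith

open Real in
lemma aux_gt {a : ℝ} (h : arctan 2 < a) (ha : a ≤ 2 * π / 3) :
    π / 5 < arcsin (cos (π / 3) / cos (a / 2)) ∧
    2 * (π / 5) ≤ arcsin (cos (π / 5) / cos (a / 2)) := by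
  have hp := pi_pos
  have h0 : 0 < arctan 2 := arctan_pos.2 (by norm_num)
  have hc : 0 < cos (a / 2) := cos_pos_of_mem_Ioo ⟨by linarith, by linarith⟩
  have hlt : cos (a / 2) < cos (arctan 2 / 2) :=
    cos_lt_cos_of_nonneg_of_le_pi (by linarith) (by linarith) (by linarith)
  have h5 : 0 < cos (π / 5) := cos_pos_of_mem_Ioo ⟨by linarith, by linarith⟩
  have h3 : 0 < cos (π / 3) := cos_pos_of_mem_Ioo ⟨by linarith, by linarith⟩
  constructor
  · have hd : cos (π / 3) / cos (arctan 2 / 2) = sin (π / 5) := by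
      have hs : 0 < sin (π / 5) := sin_pos_of_pos_of_lt_pi (by positivity) (by linarith [pi_pos])
      rw [aux_cos, cos_pi_div_three]; field_simp
    rw [lt_arcsin_iff_sin_lt' ⟨by linarith, by linarith⟩, ← hd]
    exact div_lt_div_of_pos_left h3 hc hlt
  · rw [← aux_five_s10]
    exact monotone_arcsin (div_le_div_of_nonneg_left h5.le hc hlt.le)

lemma aux_ac_s10 (p : List ℕ) (hl : Real.arctan 2 ≤ 2 * Real.pi / (p.getLast! : ℝ))
    (h0 : K p (Real.arctan 2) = 0)
    (h : ∀ a, Real.arctan 2 < a → a ≤ 2 * Real.pi / (p.getLast! : ℝ) → K p a < 0) :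
    ac p = Real.arctan 2 := by
  have : IsGreatest {a : ℝ | a ∈ Set.Icc 0 (2 * Real.pi / (p.getLast! : ℝ)) ∧ 0 ≤ K p a}
      (Real.arctan 2) := by
    refine ⟨⟨⟨(Real.arctan_pos.2 (by norm_num)).le, hl⟩, h0.ge⟩, ?_⟩
    rintro a ⟨⟨_, ha⟩, hk⟩
    by_contra hlt
    exact absurd (h a (not_le.1 hlt) ha) (not_lt.2 hk)
  exact this.csSup_eq

/-- At side length arctan 2 the patterns (3,3,3,3,3), (3,3,3,5) and (3,5,5) all have
angle defect zero; equivalently cos(arctan(2)/2) = 1/(2·sin(π/5)); and the critical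
side-lengths of these three patterns all equal arctan 2. -/
theorem stmt10 :
    K [3, 3, 3, 3, 3] (Real.arctan 2) = 0 ∧
    K [3, 3, 3, 5] (Real.arctan 2) = 0 ∧
    K [3, 5, 5] (Real.arctan 2) = 0 ∧
    Real.cos (Real.arctan 2 / 2) = 1 / (2 * Real.sin (Real.pi / 5)) ∧
    ac [3, 3, 3, 3, 3] = Real.arctan 2 ∧
    ac [3, 3, 3, 5] = Real.arctan 2 ∧
    ac [3, 5, 5] = Real.arctan 2 := by
  have hp := Real.pi_pos
  have k1 : K [3, 3, 3, 3, 3] (Real.arctan 2) = 0 := by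
    simp [K, -Real.cos_pi_div_three, -Real.cos_pi_div_five, aux_three_s10]; ring
  have k2 : K [3, 3, 3, 5] (Real.arctan 2) = 0 := by
    simp [K, -Real.cos_pi_div_three, -Real.cos_pi_div_five, aux_three_s10, aux_five_s10]; ring
  have k3 : K [3, 5, 5] (Real.arctan 2) = 0 := by
    simp [K, -Real.cos_pi_div_three, -Real.cos_pi_div_five, aux_three_s10, aux_five_s10]; ring
  have hle := aux_le_s10
  refine ⟨k1, k2, k3, aux_cos, aux_ac_s10 _ ?_ k1 ?_, aux_ac_s10 _ ?_ k2 ?_, aux_ac_s10 _ ?_ k3 ?_⟩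
  · simp; linarith
  · intro a h1 h2
    simp at h2
    obtain ⟨h3, h5⟩ := aux_gt h1 (by linarith)
    simp [K, -Real.cos_pi_div_three, -Real.cos_pi_div_five]; linarith
  · simp; linarith
  · intro a h1 h2
    simp at h2
    obtain ⟨h3, h5⟩ := aux_gt h1 (by linarith)
    simp [K, -Real.cos_pi_div_three, -Real.cos_pi_div_five]; linarith
  · simp; linarith
  · intro a h1 h2
    simp at h2
    obtain ⟨h3, h5⟩ := aux_gt h1 (by linarith)
    simp [K, -Real.cos_pi_div_three, -Real.cos_pi_div_five]; linarith
end

section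
/- Let a₀ = 2·arccos(c) where c = √(12 − 2√2)·(1 + 3√2)/17. Then at side length a₀ both vertex patterns (4,4,8) and (3,4,4,4) have angle defect zero: 4·arcsin(cos(π/4)/c) + 2·arcsin(cos(π/8)/c) = 2π and 2·arcsin(cos(π/3)/c) + 6·arcsin(cos(π/4)/c) = 2π. Consequently a_c((4,4,8)) = a_c((3,4,4,4)) = a₀. -/
theorem ac_aux (p : List ℕ) (a0 : ℝ)
    (h1 : a0 ∈ Set.Icc 0 (2 * Real.pi / (p.getLast! : ℝ))) (h2 : K p a0 = 0)
    (h3 : ∀ a, a0 < a → a ≤ 2 * Real.pi / (p.getLast! : ℝ) → K p a < K p a0) :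
    ac p = a0 := by
  apply IsGreatest.csSup_eq
  refine ⟨⟨h1, h2.ge⟩, ?_⟩
  rintro a ⟨ha, hK⟩
  by_contra h
  have := h3 a (not_le.1 h) ha.2
  linarith

theorem arcsin_div_lt (u d c : ℝ) (hu : 0 < u) (hd : u ≤ d) (hdc : d < c) :
    Real.arcsin (u / c) < Real.arcsin (u / d) := by
  have hd0 : 0 < d := by linarith
  have hc0 : 0 < c := by linarith
  apply Real.arcsin_lt_arcsin
  · have : 0 < u / c := by positivity
    linarith
  · exact div_lt_div_of_pos_left hu hd0 hdc
  · rw [div_le_one hd0]; exact hd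

/-- Let a₀ = 2·arccos c, c = √(12 − 2√2)·(1 + 3√2)/17.  At side length a₀ both
patterns (4,4,8) and (3,4,4,4) have angle defect zero, so
a_c((4,4,8)) = a_c((3,4,4,4)) = a₀. -/
theorem stmt12 (c a0 : ℝ)
    (hc : c = Real.sqrt (12 - 2 * Real.sqrt 2) * (1 + 3 * Real.sqrt 2) / 17)
    (ha0 : a0 = 2 * Real.arccos c) :
    4 * Real.arcsin (Real.cos (Real.pi / 4) / c) +
      2 * Real.arcsin (Real.cos (Real.pi / 8) / c) = 2 * Real.pi ∧
    2 * Real.arcsin (Real.cos (Real.pi / 3) / c) +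
      6 * Real.arcsin (Real.cos (Real.pi / 4) / c) = 2 * Real.pi ∧
    K [4, 4, 8] a0 = 0 ∧ K [3, 4, 4, 4] a0 = 0 ∧
    ac [4, 4, 8] = a0 ∧ ac [3, 4, 4, 4] = a0 := by
  have hw0 : 0 ≤ Real.sqrt 2 := Real.sqrt_nonneg 2
  have hw2 : Real.sqrt 2 ^ 2 = 2 := Real.sq_sqrt (by norm_num)
  have hc4 : Real.cos (Real.pi / 4) = Real.sqrt 2 / 2 := Real.cos_pi_div_four
  have hc3 : Real.cos (Real.pi / 3) = 1 / 2 := Real.cos_pi_div_three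
  have hpi := Real.pi_pos
  have hc8 : Real.cos (Real.pi / 8) ^ 2 = (2 + Real.sqrt 2) / 4 := by
    rw [Real.cos_pi_div_eight, div_pow, Real.sq_sqrt (by positivity)]; norm_num
  have hc8pos : 0 < Real.cos (Real.pi / 8) :=
    Real.cos_pos_of_mem_Ioo ⟨by linarith, by linarith⟩
  set w := Real.sqrt 2 with hw
  have hwlo : 1.41 < w := by nlinarith
  have hwhi : w < 1.42 := by nlinarith
  have hcpos : 0 < c := by
    rw [hc]
    have : 0 < Real.sqrt (12 - 2 * w) := Real.sqrt_pos.2 (by linarith)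
    positivity
  have hc2 : c ^ 2 = (12 + 2 * w) / 17 := by
    rw [hc, div_pow, mul_pow, Real.sq_sqrt (by linarith)]
    have : w ^ 3 = 2 * w := by rw [pow_succ, hw2]
    ring_nf
    rw [this, hw2]
    ring
  have hc1 : c ≤ 1 := by nlinarith
  have hc8c : Real.cos (Real.pi / 8) ≤ c := by
    refine (sq_le_sq₀ hc8pos.le hcpos.le).1 ?_
    rw [hc8, hc2]; linarith
  set s := Real.cos (Real.pi / 4) / c with hs
  have hsc : s * c = w / 2 := by rw [hs, hc4]; field_simp
  have hspos : 0 < s := by rw [hs, hc4]; positivity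
  have hs2 : s ^ 2 = (6 - w) / 8 := by
    have h : s ^ 2 * c ^ 2 = 1 / 2 := by rw [← mul_pow, hsc, div_pow, hw2]; norm_num
    have h' : (6 - w) / 8 * c ^ 2 = 1 / 2 := by rw [hc2]; nlinarith
    exact mul_right_cancel₀ (by positivity : c ^ 2 ≠ 0) (h.trans h'.symm)
  have hs1 : s ≤ 1 := by nlinarith
  set x := Real.arcsin s with hx
  have hsin : Real.sin x = s := Real.sin_arcsin (by linarith) hs1
  have hxhi : x ≤ Real.pi / 2 := Real.arcsin_le_pi_div_two s
  have hxlo : Real.pi / 4 ≤ x := by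
    rw [hx, Real.le_arcsin_iff_sin_le ⟨by linarith, by linarith⟩ ⟨by linarith, hs1⟩,
      Real.sin_pi_div_four, ← hw, ← hsc]
    nlinarith
  have hcos : Real.cos x = w * Real.cos (Real.pi / 8) / 2 := by
    have h0 : 0 ≤ Real.cos x := Real.cos_arcsin_nonneg s
    have h1 : Real.cos x ^ 2 = (w * Real.cos (Real.pi / 8) / 2) ^ 2 := by
      rw [Real.cos_sq', hsin, hs2, div_pow, mul_pow, hw2, hc8]; ring
    exact (pow_left_inj₀ h0 (by positivity) two_ne_zero).1 h1
  have hy : Real.arcsin (Real.cos (Real.pi / 8) / c) = Real.pi - 2 * x := by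
    apply Real.arcsin_eq_of_sin_eq
    · rw [Real.sin_pi_sub, Real.sin_two_mul, hsin, hcos, eq_div_iff hcpos.ne']
      have : 2 * s * (w * Real.cos (Real.pi / 8) / 2) * c
        = (s * c) * w * Real.cos (Real.pi / 8) := by ring
      rw [this, hsc]
      linear_combination Real.cos (Real.pi / 8) / 2 * hw2
    · constructor <;> linarith
  have hz : Real.arcsin (Real.cos (Real.pi / 3) / c) = Real.pi - 3 * x := by
    apply Real.arcsin_eq_of_sin_eq
    · rw [Real.sin_pi_sub, Real.sin_three_mul, hsin, eq_div_iff hcpos.ne', hc3]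
      have : (3 * s - 4 * s ^ 3) * c = (s * c) * (3 - 4 * s ^ 2) := by ring
      rw [this, hsc, hs2]
      linear_combination hw2 / 4
    · constructor <;> linarith
  have hca : Real.cos (a0 / 2) = c := by
    rw [ha0, mul_div_cancel_left₀ _ two_ne_zero, Real.cos_arccos (by linarith) hc1]
  have ha0nn : 0 ≤ a0 := by
    have := Real.arccos_nonneg c
    linarith
  have ha0le : a0 ≤ Real.pi / 4 := by
    have h : Real.arccos c ≤ Real.arccos (Real.cos (Real.pi / 8)) :=
      Real.arccos_le_arccos hc8c
    rw [Real.arccos_cos (by linarith) (by linarith)] at h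
    linarith
  have hK1 : ∀ a, K [4, 4, 8] a = 2 * Real.pi -
      (4 * Real.arcsin (Real.cos (Real.pi / 4) / Real.cos (a / 2)) +
      2 * Real.arcsin (Real.cos (Real.pi / 8) / Real.cos (a / 2))) := by
    intro a
    simp only [K, List.bind_eq_flatMap, List.pure_def, List.flatMap_cons, List.flatMap_nil,
      List.cons_append, List.nil_append, List.map_cons, List.map_nil, List.sum_cons,
      List.sum_nil, Nat.cast_ofNat]
    ring
  have hK2 : ∀ a, K [3, 4, 4, 4] a = 2 * Real.pi -
      (2 * Real.arcsin (Real.cos (Real.pi / 3) / Real.cos (a / 2)) +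
      6 * Real.arcsin (Real.cos (Real.pi / 4) / Real.cos (a / 2))) := by
    intro a
    simp only [K, List.bind_eq_flatMap, List.pure_def, List.flatMap_cons, List.flatMap_nil,
      List.cons_append, List.nil_append, List.map_cons, List.map_nil, List.sum_cons,
      List.sum_nil, Nat.cast_ofNat]
    ring
  have hE1 : 4 * x + 2 * Real.arcsin (Real.cos (Real.pi / 8) / c) = 2 * Real.pi := by
    rw [hy]; ring
  have hE2 : 2 * Real.arcsin (Real.cos (Real.pi / 3) / c) + 6 * x = 2 * Real.pi := by
    rw [hz]; ring
  have hZ1 : K [4, 4, 8] a0 = 0 := by rw [hK1, hca, ← hs, ← hx, hE1]; ring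
  have hZ2 : K [3, 4, 4, 4] a0 = 0 := by rw [hK2, hca, ← hs, ← hx, hE2]; ring
  have hl1 : (([4, 4, 8] : List ℕ).getLast! : ℝ) = 8 := by simp [List.getLast!]
  have hl2 : (([3, 4, 4, 4] : List ℕ).getLast! : ℝ) = 4 := by simp [List.getLast!]
  have hlt : ∀ a, a0 < a → a ≤ Real.pi → Real.cos (a / 2) < c := by
    intro a h h'
    rw [← hca]
    exact Real.cos_lt_cos_of_nonneg_of_le_pi (by linarith) (by linarith) (by linarith)
  have hge : ∀ t a, a0 < a → a / 2 ≤ t → t ≤ Real.pi → Real.cos t ≤ Real.cos (a / 2) := by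
    intro t a h h' h''
    exact Real.cos_le_cos_of_nonneg_of_le_pi (by linarith) h'' h'
  have h4p : 0 < Real.cos (Real.pi / 4) := by rw [hc4]; positivity
  have h3p : 0 < Real.cos (Real.pi / 3) := by rw [hc3]; positivity
  refine ⟨hE1, hE2, hZ1, hZ2, ac_aux _ _ ?_ hZ1 ?_, ac_aux _ _ ?_ hZ2 ?_⟩
  · rw [hl1]; constructor <;> linarith
  · intro a h h'
    rw [hl1] at h'
    have hd := hlt a h (by linarith)
    have A := arcsin_div_lt _ _ _ h4p (hge (Real.pi / 4) a h (by linarith) (by linarith)) hd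
    have B := arcsin_div_lt _ _ _ hc8pos (hge (Real.pi / 8) a h (by linarith) (by linarith)) hd
    rw [hK1, hK1, hca]
    linarith
  · rw [hl2]; constructor <;> linarith
  · intro a h h'
    rw [hl2] at h'
    have hd := hlt a h (by linarith)
    have A := arcsin_div_lt _ _ _ h4p (hge (Real.pi / 4) a h (by linarith) (by linarith)) hd
    have B := arcsin_div_lt _ _ _ h3p (hge (Real.pi / 3) a h (by linarith) (by linarith)) hd
    rw [hK2, hK2, hca]
    linarith
end

section
/- Let a₀ = 2·arccos(c) where c = √(75 − 10√5)·√2·(2√5 + 15)/205. Then at side length a₀ both vertex patterns (4,5,10) and (3,4,4,5) have angle defect zero: 2·arcsin(cos(π/4)/c) + 2·arcsin(cos(π/5)/c) + 2·arcsin(cos(π/10)/c) = 2π and 2·arcsin(cos(π/3)/c) + 4·arcsin(cos(π/4)/c) + 2·arcsin(cos(π/5)/c) = 2π. Consequently a_c((4,5,10)) = a_c((3,4,4,5)) = a₀. -/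
lemma le_one_aux (x : ℝ) (h : 0 ≤ 1 - x^2) : x ≤ 1 := by nlinarith

lemma sqrt_aux (x y : ℝ) (hy : 0 ≤ y) (h : x = y^2) : √x = y := by
  rw [h, Real.sqrt_sq hy]

lemma arcsin_add_aux (x y z : ℝ) (hx : 0 ≤ x) (hy : 0 ≤ y) (hx1 : x ≤ 1) (hy1 : y ≤ 1)
    (hz : 0 ≤ z) (h : √(1 - x^2) * √(1 - y^2) - x * y = √(1 - z^2)) :
    Real.arcsin x + Real.arcsin y = Real.arcsin z := by
  have h1 := Real.arcsin_nonneg.2 hx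
  have h2 := Real.arcsin_nonneg.2 hy
  have h3 := Real.arcsin_nonneg.2 hz
  have h1' := Real.arcsin_le_pi_div_two x
  have h2' := Real.arcsin_le_pi_div_two y
  have h3' := Real.arcsin_le_pi_div_two z
  apply Real.injOn_cos ⟨by linarith, by linarith⟩ ⟨by linarith, by linarith⟩
  rw [Real.cos_add, Real.cos_arcsin, Real.cos_arcsin, Real.cos_arcsin,
    Real.sin_arcsin (by linarith) hx1, Real.sin_arcsin (by linarith) hy1, h]

lemma arcsin_add_aux2 (x y z : ℝ) (hx : 0 ≤ x) (hy : 0 ≤ y) (hx1 : x ≤ 1) (hy1 : y ≤ 1)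
    (hz : 0 ≤ z) (h : √(1 - x^2) * √(1 - y^2) - x * y = -√(1 - z^2)) :
    Real.arcsin x + Real.arcsin y + Real.arcsin z = Real.pi := by
  have h1 := Real.arcsin_nonneg.2 hx
  have h2 := Real.arcsin_nonneg.2 hy
  have h3 := Real.arcsin_nonneg.2 hz
  have h1' := Real.arcsin_le_pi_div_two x
  have h2' := Real.arcsin_le_pi_div_two y
  have h3' := Real.arcsin_le_pi_div_two z
  have : Real.arcsin x + Real.arcsin y = Real.pi - Real.arcsin z := by
    apply Real.injOn_cos ⟨by linarith, by linarith⟩ ⟨by linarith, by linarith⟩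
    rw [Real.cos_pi_sub, Real.cos_add, Real.cos_arcsin, Real.cos_arcsin, Real.cos_arcsin,
        Real.sin_arcsin (by linarith) hx1, Real.sin_arcsin (by linarith) hy1, h]
  linarith

lemma term_mono (f : ℕ) (hf : 3 ≤ f) (u v : ℝ) (hu : 0 < u) (huv : u ≤ v) :
    Real.arcsin (Real.cos (Real.pi / (f:ℝ)) / v) ≤ Real.arcsin (Real.cos (Real.pi / (f:ℝ)) / u) := by
  apply Real.monotone_arcsin
  have hf' : (3:ℝ) ≤ f := by exact_mod_cast hf
  have : 0 ≤ Real.cos (Real.pi / (f:ℝ)) := by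
    apply Real.cos_nonneg_of_mem_Icc
    constructor
    · have : 0 ≤ Real.pi / (f:ℝ) := by positivity
      linarith [Real.pi_pos]
    · apply div_le_div_of_nonneg_left Real.pi_pos.le (by norm_num) (by linarith)
  exact div_le_div_of_nonneg_left this hu huv

lemma K_a (a : ℝ) : K [4, 5, 10] a = 2 * Real.pi -
    (2 * Real.arcsin (Real.cos (Real.pi / 4) / Real.cos (a / 2)) +
      (2 * Real.arcsin (Real.cos (Real.pi / 5) / Real.cos (a / 2)) +
      (2 * Real.arcsin (Real.cos (Real.pi / 10) / Real.cos (a / 2))))) := by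
  simp [K]

lemma K_b (a : ℝ) : K [3, 4, 4, 5] a = 2 * Real.pi -
    (2 * Real.arcsin (Real.cos (Real.pi / 3) / Real.cos (a / 2)) +
      (2 * Real.arcsin (Real.cos (Real.pi / 4) / Real.cos (a / 2)) +
      (2 * Real.arcsin (Real.cos (Real.pi / 4) / Real.cos (a / 2)) +
      (2 * Real.arcsin (Real.cos (Real.pi / 5) / Real.cos (a / 2)))))) := by
  simp [K]

set_option maxHeartbeats 1000000 in
/-- Let a₀ = 2·arccos c, c = √(75 − 10√5)·√2·(2√5 + 15)/205.  At side length a₀ both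
patterns (4,5,10) and (3,4,4,5) have angle defect zero, so
a_c((4,5,10)) = a_c((3,4,4,5)) = a₀. -/
theorem stmt13 (c a0 : ℝ)
    (hc : c = Real.sqrt (75 - 10 * Real.sqrt 5) * Real.sqrt 2 * (2 * Real.sqrt 5 + 15) / 205)
    (ha0 : a0 = 2 * Real.arccos c) :
    2 * Real.arcsin (Real.cos (Real.pi / 4) / c) +
      2 * Real.arcsin (Real.cos (Real.pi / 5) / c) +
      2 * Real.arcsin (Real.cos (Real.pi / 10) / c) = 2 * Real.pi ∧
    2 * Real.arcsin (Real.cos (Real.pi / 3) / c) +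
      4 * Real.arcsin (Real.cos (Real.pi / 4) / c) +
      2 * Real.arcsin (Real.cos (Real.pi / 5) / c) = 2 * Real.pi ∧
    K [4, 5, 10] a0 = 0 ∧ K [3, 4, 4, 5] a0 = 0 ∧
    ac [4, 5, 10] = a0 ∧ ac [3, 4, 4, 5] = a0 := by
  have hpi := Real.pi_pos
  obtain ⟨s, hs⟩ : ∃ s, s = √(5:ℝ) := ⟨_, rfl⟩
  obtain ⟨t, ht⟩ : ∃ t, t = √(2:ℝ) := ⟨_, rfl⟩
  have hs2 : s^2 = 5 := by rw [hs]; norm_num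
  have ht2 : t^2 = 2 := by rw [ht]; norm_num
  have hs0 : 0 ≤ s := hs ▸ Real.sqrt_nonneg _
  have ht0 : 0 < t := by rw [ht]; positivity
  have hsl : 2.2 < s := by nlinarith
  have hsu : s < 2.3 := by nlinarith
  have hc0 : 0 < c := by
    rw [hc, ← hs, ← ht]
    have : 0 < √(75 - 10 * s) := Real.sqrt_pos.2 (by linarith)
    positivity
  have hc2 : c^2 = (30 + 4 * s) / 41 := by
    rw [hc, ← hs, ← ht, div_pow, mul_pow, mul_pow, Real.sq_sqrt (by linarith), ht2]
    have : s^3 = 5 * s := by rw [pow_succ, hs2]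
    ring_nf
    rw [this, hs2]; ring
  have hci : (1 / c)^2 = (15 - 2 * s) / 10 := by
    rw [div_pow, hc2]
    field_simp
    nlinarith
  obtain ⟨d, hd⟩ : ∃ d, d = 1 / c := ⟨_, rfl⟩
  have hd0 : 0 < d := by rw [hd]; positivity
  rw [← hd] at hci
  have hdiv : ∀ x, x / c = x * d := by intro x; rw [hd]; ring
  have k3 : Real.cos (Real.pi / 3) = 1 / 2 := Real.cos_pi_div_three
  have k4 : Real.cos (Real.pi / 4) = t / 2 := by rw [Real.cos_pi_div_four, ht]
  have k5 : Real.cos (Real.pi / 5) = (1 + s) / 4 := by rw [Real.cos_pi_div_five, hs]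
  have k10p : 0 ≤ Real.cos (Real.pi / 10) :=
    Real.cos_nonneg_of_mem_Icc ⟨by linarith, by linarith⟩
  have k10 : Real.cos (Real.pi / 10) ^ 2 = (5 + s) / 8 := by
    have : Real.cos (Real.pi / 5) = 2 * Real.cos (Real.pi / 10) ^ 2 - 1 := by
      rw [← Real.cos_two_mul]; ring_nf
    linarith
  obtain ⟨w, hw⟩ : ∃ w, w = Real.cos (Real.pi / 10) := ⟨_, rfl⟩
  have x10 : 1 - (w / c)^2 = (3 - s) / 16 := by
    rw [hdiv, mul_pow, hw, k10, hci]; ring_nf; rw [hs2]; ring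
  have y10 : √(1 - (w / c)^2) = t * (s - 1) / 8 := by
    have h1 : 0 < s - 1 := by linarith
    rw [x10]
    apply sqrt_aux _ _ (by positivity)
    rw [div_pow, mul_pow, ht2]; ring_nf; rw [hs2]; ring
  have x4 : 1 - (t / 2 * d)^2 = (5 + 2 * s) / 20 := by
    rw [mul_pow, div_pow, ht2, hci]; ring
  have x3 : 1 - (1 / 2 * d)^2 = (25 + 2 * s) / 40 := by
    rw [mul_pow, hci]; ring
  have x5 : 1 - ((1 + s) / 4 * d)^2 = 9 * (5 - s) / 80 := by
    rw [mul_pow, hci]; ring_nf; rw [show s^3 = 5 * s by rw [pow_succ, hs2], hs2]; ring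
  have l4 : t / 2 * d ≤ 1 := le_one_aux _ (by rw [x4]; linarith)
  have l5 : (1 + s) / 4 * d ≤ 1 := le_one_aux _ (by rw [x5]; linarith)
  have l10 : w / c ≤ 1 := le_one_aux _ (by rw [x10]; linarith)
  have l3 : 1 / 2 * d ≤ 1 := le_one_aux _ (by rw [x3]; linarith)
  have w0 : 0 ≤ w / c := div_nonneg (hw ▸ k10p) hc0.le
  have E1 : Real.arcsin (t / 2 * d) + Real.arcsin ((1 + s) / 4 * d) + Real.arcsin (w / c)
      = Real.pi := by
    apply arcsin_add_aux2 _ _ _ (by positivity) (by positivity) l4 l5 w0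
    rw [y10, x4, x5, ← Real.sqrt_mul (by linarith)]
    have : √((5 + 2 * s) / 20 * (9 * (5 - s) / 80)) = 3 * t * (5 + s) / 80 := by
      apply sqrt_aux _ _ (by positivity)
      rw [div_pow, mul_pow, mul_pow, ht2]
      ring_nf; rw [hs2]; ring
    rw [this]
    have : t / 2 * d * ((1 + s) / 4 * d) = t * (1 + s) / 8 * d^2 := by ring
    rw [this, hci]
    ring_nf; rw [hs2]; ring
  have E2 : Real.arcsin (1 / 2 * d) + Real.arcsin (t / 2 * d) = Real.arcsin (w / c) := by
    apply arcsin_add_aux _ _ _ (by positivity) (by positivity) l3 l4 w0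
    rw [y10, x3, x4, ← Real.sqrt_mul (by linarith)]
    have : √((25 + 2 * s) / 40 * ((5 + 2 * s) / 20)) = t * (10 + 3 * s) / 40 := by
      apply sqrt_aux _ _ (by positivity)
      rw [div_pow, mul_pow, ht2]
      ring_nf; rw [hs2]; ring
    rw [this]
    have : 1 / 2 * d * (t / 2 * d) = t / 4 * d^2 := by ring
    rw [this, hci]
    ring
  have hc1 : c ≤ 1 := le_one_aux _ (by rw [hc2]; linarith)
  have hcos : Real.cos (a0 / 2) = c := by
    rw [ha0, mul_div_cancel_left₀ _ (by norm_num), Real.cos_arccos (by linarith) hc1]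
  have F1 : 2 * Real.arcsin (Real.cos (Real.pi / 4) / c) +
      2 * Real.arcsin (Real.cos (Real.pi / 5) / c) +
      2 * Real.arcsin (Real.cos (Real.pi / 10) / c) = 2 * Real.pi := by
    rw [← hw, k4, k5, hdiv (t/2), hdiv ((1+s)/4)]; linarith
  have F2 : 2 * Real.arcsin (Real.cos (Real.pi / 3) / c) +
      4 * Real.arcsin (Real.cos (Real.pi / 4) / c) +
      2 * Real.arcsin (Real.cos (Real.pi / 5) / c) = 2 * Real.pi := by
    rw [k3, k4, k5, hdiv (t/2), hdiv ((1+s)/4), hdiv (1/2)]; linarith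
  have G1 : K [4, 5, 10] a0 = 0 := by
    rw [K_a, hcos]; linarith
  have G2 : K [3, 4, 4, 5] a0 = 0 := by
    rw [K_b, hcos]; linarith
  have a0n : 0 ≤ a0 := by rw [ha0]; have := Real.arccos_nonneg c; linarith
  have a0l : a0 ≤ 2 * Real.pi / 10 := by
    have h1 : w ≤ c := by rwa [div_le_one hc0] at l10
    have h2 := Real.arccos_le_arccos h1
    rw [hw, Real.arccos_cos (by positivity) (by linarith)] at h2
    rw [ha0]; linarith
  -- comparison for larger side lengths
  have key : ∀ a, a0 < a → a ≤ 2 * Real.pi / 5 → 0 < Real.cos (a / 2) ∧ Real.cos (a / 2) ≤ c ∧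
      Real.arcsin (Real.cos (Real.pi / 4) / c) <
        Real.arcsin (Real.cos (Real.pi / 4) / Real.cos (a / 2)) := by
    intro a h1 h2
    have p : 0 < Real.cos (a / 2) := Real.cos_pos_of_mem_Ioo ⟨by linarith, by linarith⟩
    have q : Real.cos (a / 2) < c := by
      rw [← hcos]
      exact Real.cos_lt_cos_of_nonneg_of_le_pi (by linarith) (by linarith) (by linarith)
    have k : 0 < Real.cos (Real.pi / 4) := by rw [k4]; positivity
    have r : Real.cos (Real.pi / 4) ≤ Real.cos (a / 2) :=
      Real.cos_le_cos_of_nonneg_of_le_pi (by linarith) (by linarith) (by linarith)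
    refine ⟨p, q.le, Real.arcsin_lt_arcsin ?_ (div_lt_div_of_pos_left k p q) ?_⟩
    · have : 0 ≤ Real.cos (Real.pi / 4) / c := by positivity
      linarith
    · rwa [div_le_one p]
  refine ⟨F1, F2, G1, G2, ?_, ?_⟩
  · apply IsGreatest.csSup_eq
    refine ⟨⟨⟨a0n, ?_⟩, G1.ge⟩, ?_⟩
    · simpa using a0l
    · rintro a ⟨⟨h1, h2⟩, h3⟩
      by_contra h; push Not at h
      have h2' : a ≤ 2 * Real.pi / 10 := by simpa using h2
      obtain ⟨p, q, r⟩ := key a h (by linarith)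
      have m5 := term_mono 5 (by norm_num) _ _ p q
      have m10 := term_mono 10 (by norm_num) _ _ p q
      rw [K_a] at h3
      push_cast at m5 m10
      linarith
  · apply IsGreatest.csSup_eq
    refine ⟨⟨⟨a0n, ?_⟩, G2.ge⟩, ?_⟩
    · have : a0 ≤ 2 * Real.pi / 5 := by linarith
      simpa using this
    · rintro a ⟨⟨h1, h2⟩, h3⟩
      by_contra h; push Not at h
      have h2' : a ≤ 2 * Real.pi / 5 := by simpa using h2
      obtain ⟨p, q, r⟩ := key a h (by linarith)
      have m5 := term_mono 5 (by norm_num) _ _ p q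
      have m3 := term_mono 3 (by norm_num) _ _ p q
      rw [K_b] at h3
      push_cast at m5 m3
      linarith
end

section
/- Let a₁ be the unique solution in (0, 2π/29] of K_{a}((3,7,29)) = 0 and a₂ the unique solution in (0, 2π/16] of K_{a}((3,9,16)) = 0, i.e. a₁ = a_c((3,7,29)) and a₂ = a_c((3,9,16)). Then a₁ < a₂, and 1.647×10⁻⁵ < K_{a₁}((3,9,16)) < 1.648×10⁻⁵. -/
/-- Taylor partial sums of cosine. -/
noncomputable def Ct (k : ℕ) (x : ℝ) : ℝ :=
  ∑ i ∈ Finset.range k, (-1) ^ i * x ^ (2 * i) / ((2 * i).factorial : ℝ)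

/-- Taylor partial sums of sine. -/
noncomputable def St (k : ℕ) (x : ℝ) : ℝ :=
  ∑ i ∈ Finset.range k, (-1) ^ i * x ^ (2 * i + 1) / ((2 * i + 1).factorial : ℝ)

lemma hasDerivAt_St (k : ℕ) (x : ℝ) : HasDerivAt (St k) (Ct k x) x := by
  unfold Ct
  have : St k = fun x => ∑ i ∈ Finset.range k,
      (-1) ^ i * x ^ (2 * i + 1) / ((2 * i + 1).factorial : ℝ) := rfl
  rw [this]
  apply HasDerivAt.fun_sum
  intro i _
  have h := (((hasDerivAt_pow (2 * i + 1) x).const_mul ((-1 : ℝ) ^ i)).div_const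
    ((2 * i + 1).factorial : ℝ))
  refine h.congr_deriv ?_
  symm
  rw [Nat.factorial_succ]
  have h1 : ((2 * i).factorial : ℝ) ≠ 0 := by positivity
  have h2 : ((2 * i + 1 : ℕ) : ℝ) ≠ 0 := by positivity
  push_cast at h2 ⊢
  field_simp

lemma hasDerivAt_Ct (k : ℕ) (x : ℝ) : HasDerivAt (Ct (k + 1)) (-St k x) x := by
  have : Ct (k + 1) = fun x => (∑ i ∈ Finset.range k,
      (-1) ^ (i + 1) * x ^ (2 * i + 2) / ((2 * i + 2).factorial : ℝ)) + 1 := by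
    funext x
    unfold Ct
    rw [Finset.sum_range_succ']
    simp [mul_add]
  rw [this]
  unfold St
  rw [← Finset.sum_neg_distrib]
  apply HasDerivAt.add_const
  apply HasDerivAt.fun_sum
  intro i _
  have h := (((hasDerivAt_pow (2 * i + 2) x).const_mul ((-1 : ℝ) ^ (i + 1))).div_const
    ((2 * i + 2).factorial : ℝ))
  refine h.congr_deriv ?_
  symm
  rw [Nat.factorial_succ (2 * i + 1)]
  have h1 : ((2 * i + 1).factorial : ℝ) ≠ 0 := by positivity
  have h2 : ((2 * i + 2 : ℕ) : ℝ) ≠ 0 := by positivity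
  push_cast at h2 ⊢
  have h4 : (2 * (i : ℝ) + 1 + 1) ≠ 0 := by positivity
  rw [pow_succ (-1 : ℝ) i]
  field_simp
  ring

lemma St_zero (k : ℕ) : St k 0 = 0 := by simp [St]

lemma Ct_zero (k : ℕ) : Ct (k + 1) 0 = 1 := by
  unfold Ct
  rw [Finset.sum_range_succ']
  simp

lemma nonneg_of_deriv (f f' : ℝ → ℝ) (hf : ∀ x, HasDerivAt f (f' x) x) (h0 : f 0 = 0)
    (h' : ∀ x, 0 ≤ x → 0 ≤ f' x) (x : ℝ) (hx : 0 ≤ x) : 0 ≤ f x := by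
  have hm : MonotoneOn f (Set.Ici 0) := by
    apply monotoneOn_of_deriv_nonneg (convex_Ici 0)
    · exact fun y _ => (hf y).continuousAt.continuousWithinAt
    · exact fun y _ => (hf y).differentiableAt.differentiableWithinAt
    · intro y hy
      rw [(hf y).deriv]
      rw [interior_Ici] at hy
      exact h' y (le_of_lt hy)
  have := hm (Set.mem_Ici.2 le_rfl) (Set.mem_Ici.2 hx) hx
  rwa [h0] at this

lemma taylor_main (k : ℕ) :
    (∀ x : ℝ, 0 ≤ x → 0 ≤ (-1) ^ (k + 1) * (Real.cos x - Ct (k + 1) x)) ∧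
    (∀ x : ℝ, 0 ≤ x → 0 ≤ (-1) ^ (k + 1) * (Real.sin x - St (k + 1) x)) := by
  have key : ∀ k : ℕ, (∀ x : ℝ, 0 ≤ x → 0 ≤ (-1) ^ (k + 1) * (Real.cos x - Ct (k + 1) x)) →
      (∀ x : ℝ, 0 ≤ x → 0 ≤ (-1) ^ (k + 1) * (Real.sin x - St (k + 1) x)) := by
    intro k h
    apply nonneg_of_deriv _ _ _ _ h
    · intro x
      exact ((Real.hasDerivAt_sin x).sub (hasDerivAt_St (k + 1) x)).const_mul _
    · simp [St_zero]
  induction k with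
  | zero =>
    have h : ∀ x : ℝ, 0 ≤ x → 0 ≤ (-1) ^ (0 + 1) * (Real.cos x - Ct (0 + 1) x) := by
      intro x _
      have := Real.cos_le_one x
      simp [Ct]
      linarith
    exact ⟨h, key 0 h⟩
  | succ k ih =>
    have h : ∀ x : ℝ, 0 ≤ x →
        0 ≤ (-1) ^ (k + 1 + 1) * (Real.cos x - Ct (k + 1 + 1) x) := by
      apply nonneg_of_deriv _ (fun x => (-1) ^ (k + 1 + 1) * (-Real.sin x - -St (k + 1) x))
      · intro x
        exact ((Real.hasDerivAt_cos x).sub (hasDerivAt_Ct (k + 1) x)).const_mul _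
      · simp [Ct_zero]
      · intro x hx
        have := ih.2 x hx
        rw [pow_succ]
        linarith
    exact ⟨h, key _ h⟩

lemma sin_upper {x : ℝ} (hx : 0 ≤ x) : Real.sin x ≤ St 11 x := by
  have := (taylor_main 10).2 x hx
  norm_num at this
  linarith

lemma sin_lower {x : ℝ} (hx : 0 ≤ x) : St 12 x ≤ Real.sin x := by
  have := (taylor_main 11).2 x hx
  norm_num at this
  linarith

lemma cos_upper {x : ℝ} (hx : 0 ≤ x) : Real.cos x ≤ Ct 11 x := by
  have := (taylor_main 10).1 x hx
  norm_num at this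
  linarith

lemma cos_lower {x : ℝ} (hx : 0 ≤ x) : Ct 10 x ≤ Real.cos x := by
  have := (taylor_main 9).1 x hx
  norm_num at this
  linarith

lemma cos_pi_ge (f : ℕ) (hf : (3 : ℝ) ≤ f) {c : ℝ}
    (h : c ≤ Ct 10 (3.14159265358979323847 / (f : ℝ))) : c ≤ Real.cos (Real.pi / (f : ℝ)) := by
  have hp := Real.pi_pos
  have h1 := Real.pi_lt_d20
  have h2 := Real.pi_gt_d20
  have hfp : (0 : ℝ) < f := by linarith
  refine (h.trans (cos_lower (by positivity))).trans ?_
  apply Real.cos_le_cos_of_nonneg_of_le_pi (by positivity)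
  · rw [div_le_iff₀ hfp]
    norm_num at h2 ⊢
    nlinarith
  · gcongr

lemma cos_pi_le (f : ℕ) (hf : (3 : ℝ) ≤ f) {c : ℝ}
    (h : Ct 11 (3.14159265358979323846 / (f : ℝ)) ≤ c) : Real.cos (Real.pi / (f : ℝ)) ≤ c := by
  have hp := Real.pi_pos
  have h2 := Real.pi_gt_d20
  have hfp : (0 : ℝ) < f := by linarith
  refine le_trans ?_ ((cos_upper (by positivity)).trans h)
  apply Real.cos_le_cos_of_nonneg_of_le_pi (by positivity)
  · exact div_le_self hp.le (by linarith)
  · gcongr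

lemma arcsin_lower {t T y c C : ℝ} (h0 : 0 < t) (h : t ≤ T) (hy0 : 0 ≤ y) (hy : y ≤ 3 / 2)
    (hc0 : 0 ≤ c) (hc : c ≤ C) (hS : St 11 y ≤ c / T) : y ≤ Real.arcsin (C / t) := by
  have hp := Real.pi_gt_d2
  rw [Real.le_arcsin_iff_sin_le' ⟨by linarith, by norm_num at hp; linarith⟩]
  refine (sin_upper hy0).trans (hS.trans ?_)
  have hC : 0 ≤ C := hc0.trans hc
  gcongr

lemma arcsin_upper {t T y c C : ℝ} (h0 : 0 < T) (h : T ≤ t) (hy0 : 0 ≤ y) (hy : y ≤ 3 / 2)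
    (hc0 : 0 ≤ c) (hc : C ≤ c) (hS : c / T ≤ St 12 y) : Real.arcsin (C / t) ≤ y := by
  have hp := Real.pi_gt_d2
  rw [Real.arcsin_le_iff_le_sin' ⟨by linarith, by norm_num at hp; linarith⟩]
  refine le_trans ?_ (hS.trans (sin_lower hy0))
  gcongr

lemma cos_nat_nonneg (m : ℕ) (hm : 3 ≤ m) : 0 ≤ Real.cos (Real.pi / (m : ℝ)) := by
  have hp := Real.pi_pos
  have hm' : (3 : ℝ) ≤ m := by exact_mod_cast hm
  apply Real.cos_nonneg_of_neg_pi_div_two_le_of_le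
  · have : 0 ≤ Real.pi / (m : ℝ) := by positivity
    linarith
  · apply div_le_div_of_nonneg_left hp.le (by norm_num) (by linarith)

lemma K_eq (l m n : ℕ) (a : ℝ) : K [l, m, n] a = 2 * Real.pi -
    (2 * Real.arcsin (Real.cos (Real.pi / (l : ℝ)) / Real.cos (a / 2)) +
    (2 * Real.arcsin (Real.cos (Real.pi / (m : ℝ)) / Real.cos (a / 2)) +
    2 * Real.arcsin (Real.cos (Real.pi / (n : ℝ)) / Real.cos (a / 2)))) := by
  simp [K]

lemma K_anti (m n : ℕ) (hm : 3 ≤ m) (hn : 3 ≤ n) {a b : ℝ} (ha : 0 ≤ a) (hab : a < b)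
    (hb : b ≤ 2 * Real.pi / 3) : K [3, m, n] b < K [3, m, n] a := by
  have hp := Real.pi_pos
  have hcb : 1 / 2 ≤ Real.cos (b / 2) := by
    rw [← Real.cos_pi_div_three]
    apply Real.cos_le_cos_of_nonneg_of_le_pi <;> linarith
  have hlt : Real.cos (b / 2) < Real.cos (a / 2) := by
    apply Real.cos_lt_cos_of_nonneg_of_le_pi <;> linarith
  have hcb0 : 0 < Real.cos (b / 2) := by linarith
  have hmono : ∀ m : ℕ, 3 ≤ m →
      Real.arcsin (Real.cos (Real.pi / (m : ℝ)) / Real.cos (a / 2)) ≤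
      Real.arcsin (Real.cos (Real.pi / (m : ℝ)) / Real.cos (b / 2)) := by
    intro m hm
    apply Real.monotone_arcsin
    apply div_le_div_of_nonneg_left (cos_nat_nonneg m hm) hcb0 hlt.le
  have h3 : Real.arcsin (Real.cos (Real.pi / ((3 : ℕ) : ℝ)) / Real.cos (a / 2)) <
      Real.arcsin (Real.cos (Real.pi / ((3 : ℕ) : ℝ)) / Real.cos (b / 2)) := by
    have e : Real.cos (Real.pi / ((3 : ℕ) : ℝ)) = 1 / 2 := by
      rw [← Real.cos_pi_div_three]; norm_num
    rw [e]
    have hca : 0 < Real.cos (a / 2) := by linarith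
    apply Real.strictMonoOn_arcsin
    · constructor
      · have : 0 ≤ 1 / 2 / Real.cos (a / 2) := by positivity
        linarith
      · rw [div_le_one hca]; linarith
    · constructor
      · have : 0 ≤ 1 / 2 / Real.cos (b / 2) := by positivity
        linarith
      · rw [div_le_one hcb0]; linarith
    · exact div_lt_div_of_pos_left (by norm_num) hcb0 hlt
  have h1 := hmono m hm
  have h2 := hmono n hn
  rw [K_eq, K_eq]
  linarith

lemma ac_eq (m n : ℕ) (hm : 3 ≤ m) (hn : 3 ≤ n) {a : ℝ} (ha : 0 < a)
    (ha' : a ≤ 2 * Real.pi / (n : ℝ)) (hK : K [3, m, n] a = 0) : a = ac [3, m, n] := by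
  have hp := Real.pi_pos
  have hn' : (3 : ℝ) ≤ n := by exact_mod_cast hn
  have hle : 2 * Real.pi / (n : ℝ) ≤ 2 * Real.pi / 3 :=
    div_le_div_of_nonneg_left (by positivity) (by norm_num) hn'
  have hl : ([3, m, n] : List ℕ).getLast! = n := rfl
  symm
  unfold ac
  rw [hl]
  apply IsGreatest.csSup_eq
  refine ⟨⟨⟨ha.le, ha'⟩, hK.ge⟩, ?_⟩
  rintro b ⟨⟨_, hb⟩, hKb⟩
  by_contra! hlt
  have := K_anti m n hm hn ha.le hlt (hb.trans hle)
  linarith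

lemma cl3 : (((49999999999995/100000000000000):ℝ)) ≤ Real.cos (Real.pi / ((3:ℕ):ℝ)) := by
  apply cos_pi_ge 3 (by norm_num)
  norm_num [Ct, Finset.sum_range_succ, Nat.factorial]
lemma cu3 : Real.cos (Real.pi / ((3:ℕ):ℝ)) ≤ (((50000000000005/100000000000000):ℝ)) := by
  apply cos_pi_le 3 (by norm_num)
  norm_num [Ct, Finset.sum_range_succ, Nat.factorial]
lemma cl7 : (((90096886790237/100000000000000):ℝ)) ≤ Real.cos (Real.pi / ((7:ℕ):ℝ)) := by
  apply cos_pi_ge 7 (by norm_num)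
  norm_num [Ct, Finset.sum_range_succ, Nat.factorial]
lemma cu7 : Real.cos (Real.pi / ((7:ℕ):ℝ)) ≤ (((90096886790247/100000000000000):ℝ)) := by
  apply cos_pi_le 7 (by norm_num)
  norm_num [Ct, Finset.sum_range_succ, Nat.factorial]
lemma cl29 : (((99413795715431/100000000000000):ℝ)) ≤ Real.cos (Real.pi / ((29:ℕ):ℝ)) := by
  apply cos_pi_ge 29 (by norm_num)
  norm_num [Ct, Finset.sum_range_succ, Nat.factorial]
lemma cu29 : Real.cos (Real.pi / ((29:ℕ):ℝ)) ≤ (((99413795715441/100000000000000):ℝ)) := by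
  apply cos_pi_le 29 (by norm_num)
  norm_num [Ct, Finset.sum_range_succ, Nat.factorial]
lemma cl9 : (((93969262078586/100000000000000):ℝ)) ≤ Real.cos (Real.pi / ((9:ℕ):ℝ)) := by
  apply cos_pi_ge 9 (by norm_num)
  norm_num [Ct, Finset.sum_range_succ, Nat.factorial]
lemma cu9 : Real.cos (Real.pi / ((9:ℕ):ℝ)) ≤ (((93969262078596/100000000000000):ℝ)) := by
  apply cos_pi_le 9 (by norm_num)
  norm_num [Ct, Finset.sum_range_succ, Nat.factorial]
lemma cl16 : (((98078528040318/100000000000000):ℝ)) ≤ Real.cos (Real.pi / ((16:ℕ):ℝ)) := by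
  apply cos_pi_ge 16 (by norm_num)
  norm_num [Ct, Finset.sum_range_succ, Nat.factorial]
lemma cu16 : Real.cos (Real.pi / ((16:ℕ):ℝ)) ≤ (((98078528040328/100000000000000):ℝ)) := by
  apply cos_pi_le 16 (by norm_num)
  norm_num [Ct, Finset.sum_range_succ, Nat.factorial]
lemma al3_0 {t : ℝ} (h0 : 0 < t) (h : t ≤ (997456667/1000000000:ℝ)) :
    ((5250715404041/10000000000000):ℝ) ≤ Real.arcsin (Real.cos (Real.pi / ((3:ℕ):ℝ)) / t) := by
  apply arcsin_lower h0 h (by norm_num) (by norm_num) (by norm_num) cl3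
  norm_num [St, Finset.sum_range_succ, Nat.factorial]
lemma au3_0 {t : ℝ} (h : (997456667/1000000000:ℝ) ≤ t) :
    Real.arcsin (Real.cos (Real.pi / ((3:ℕ):ℝ)) / t) ≤ ((5250715404101/10000000000000):ℝ) := by
  apply arcsin_upper (by norm_num) h (by norm_num) (by norm_num) (by norm_num) cu3
  norm_num [St, Finset.sum_range_succ, Nat.factorial]
lemma al3_1 {t : ℝ} (h0 : 0 < t) (h : t ≤ (623410417/625000000:ℝ)) :
    ((5250715402879/10000000000000):ℝ) ≤ Real.arcsin (Real.cos (Real.pi / ((3:ℕ):ℝ)) / t) := by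
  apply arcsin_lower h0 h (by norm_num) (by norm_num) (by norm_num) cl3
  norm_num [St, Finset.sum_range_succ, Nat.factorial]
lemma au3_1 {t : ℝ} (h : (623410417/625000000:ℝ) ≤ t) :
    Real.arcsin (Real.cos (Real.pi / ((3:ℕ):ℝ)) / t) ≤ ((5250715402939/10000000000000):ℝ) := by
  apply arcsin_upper (by norm_num) h (by norm_num) (by norm_num) (by norm_num) cu3
  norm_num [St, Finset.sum_range_succ, Nat.factorial]
lemma al7_0 {t : ℝ} (h0 : 0 < t) (h : t ≤ (997456667/1000000000:ℝ)) :
    ((11273215848543/10000000000000):ℝ) ≤ Real.arcsin (Real.cos (Real.pi / ((7:ℕ):ℝ)) / t) := by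
  apply arcsin_lower h0 h (by norm_num) (by norm_num) (by norm_num) cl7
  norm_num [St, Finset.sum_range_succ, Nat.factorial]
lemma au7_0 {t : ℝ} (h : (997456667/1000000000:ℝ) ≤ t) :
    Real.arcsin (Real.cos (Real.pi / ((7:ℕ):ℝ)) / t) ≤ ((11273215848603/10000000000000):ℝ) := by
  apply arcsin_upper (by norm_num) h (by norm_num) (by norm_num) (by norm_num) cu7
  norm_num [St, Finset.sum_range_succ, Nat.factorial]
lemma al7_1 {t : ℝ} (h0 : 0 < t) (h : t ≤ (623410417/625000000:ℝ)) :
    ((11273215844322/10000000000000):ℝ) ≤ Real.arcsin (Real.cos (Real.pi / ((7:ℕ):ℝ)) / t) := by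
  apply arcsin_lower h0 h (by norm_num) (by norm_num) (by norm_num) cl7
  norm_num [St, Finset.sum_range_succ, Nat.factorial]
lemma au7_1 {t : ℝ} (h : (623410417/625000000:ℝ) ≤ t) :
    Real.arcsin (Real.cos (Real.pi / ((7:ℕ):ℝ)) / t) ≤ ((11273215844382/10000000000000):ℝ) := by
  apply arcsin_upper (by norm_num) h (by norm_num) (by norm_num) (by norm_num) cu7
  norm_num [St, Finset.sum_range_succ, Nat.factorial]
lemma al29_0 {t : ℝ} (h0 : 0 < t) (h : t ≤ (997456667/1000000000:ℝ)) :
    ((14891995302519/10000000000000):ℝ) ≤ Real.arcsin (Real.cos (Real.pi / ((29:ℕ):ℝ)) / t) := by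
  apply arcsin_lower h0 h (by norm_num) (by norm_num) (by norm_num) cl29
  norm_num [St, Finset.sum_range_succ, Nat.factorial]
lemma au29_0 {t : ℝ} (h : (997456667/1000000000:ℝ) ≤ t) :
    Real.arcsin (Real.cos (Real.pi / ((29:ℕ):ℝ)) / t) ≤ ((14891995302579/10000000000000):ℝ) := by
  apply arcsin_upper (by norm_num) h (by norm_num) (by norm_num) (by norm_num) cu29
  norm_num [St, Finset.sum_range_succ, Nat.factorial]
lemma al29_1 {t : ℝ} (h0 : 0 < t) (h : t ≤ (623410417/625000000:ℝ)) :
    ((14891995278000/10000000000000):ℝ) ≤ Real.arcsin (Real.cos (Real.pi / ((29:ℕ):ℝ)) / t) := by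
  apply arcsin_lower h0 h (by norm_num) (by norm_num) (by norm_num) cl29
  norm_num [St, Finset.sum_range_succ, Nat.factorial]
lemma au29_1 {t : ℝ} (h : (623410417/625000000:ℝ) ≤ t) :
    Real.arcsin (Real.cos (Real.pi / ((29:ℕ):ℝ)) / t) ≤ ((14891995278060/10000000000000):ℝ) := by
  apply arcsin_upper (by norm_num) h (by norm_num) (by norm_num) (by norm_num) cu29
  norm_num [St, Finset.sum_range_succ, Nat.factorial]
lemma al9_0 {t : ℝ} (h0 : 0 < t) (h : t ≤ (997456667/1000000000:ℝ)) :
    ((12288048538419/10000000000000):ℝ) ≤ Real.arcsin (Real.cos (Real.pi / ((9:ℕ):ℝ)) / t) := by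
  apply arcsin_lower h0 h (by norm_num) (by norm_num) (by norm_num) cl9
  norm_num [St, Finset.sum_range_succ, Nat.factorial]
lemma au9_0 {t : ℝ} (h : (997456667/1000000000:ℝ) ≤ t) :
    Real.arcsin (Real.cos (Real.pi / ((9:ℕ):ℝ)) / t) ≤ ((12288048538479/10000000000000):ℝ) := by
  apply arcsin_upper (by norm_num) h (by norm_num) (by norm_num) (by norm_num) cu9
  norm_num [St, Finset.sum_range_succ, Nat.factorial]
lemma al9_1 {t : ℝ} (h0 : 0 < t) (h : t ≤ (623410417/625000000:ℝ)) :
    ((12288048532787/10000000000000):ℝ) ≤ Real.arcsin (Real.cos (Real.pi / ((9:ℕ):ℝ)) / t) := by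
  apply arcsin_lower h0 h (by norm_num) (by norm_num) (by norm_num) cl9
  norm_num [St, Finset.sum_range_succ, Nat.factorial]
lemma au9_1 {t : ℝ} (h : (623410417/625000000:ℝ) ≤ t) :
    Real.arcsin (Real.cos (Real.pi / ((9:ℕ):ℝ)) / t) ≤ ((12288048532847/10000000000000):ℝ) := by
  apply arcsin_upper (by norm_num) h (by norm_num) (by norm_num) (by norm_num) cu9
  norm_num [St, Finset.sum_range_succ, Nat.factorial]
lemma al16_0 {t : ℝ} (h0 : 0 < t) (h : t ≤ (997456667/1000000000:ℝ)) :
    ((13877080241233/10000000000000):ℝ) ≤ Real.arcsin (Real.cos (Real.pi / ((16:ℕ):ℝ)) / t) := by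
  apply arcsin_lower h0 h (by norm_num) (by norm_num) (by norm_num) cl16
  norm_num [St, Finset.sum_range_succ, Nat.factorial]
lemma au16_0 {t : ℝ} (h : (997456667/1000000000:ℝ) ≤ t) :
    Real.arcsin (Real.cos (Real.pi / ((16:ℕ):ℝ)) / t) ≤ ((13877080241293/10000000000000):ℝ) := by
  apply arcsin_upper (by norm_num) h (by norm_num) (by norm_num) (by norm_num) cu16
  norm_num [St, Finset.sum_range_succ, Nat.factorial]
lemma al16_1 {t : ℝ} (h0 : 0 < t) (h : t ≤ (623410417/625000000:ℝ)) :
    ((13877080230404/10000000000000):ℝ) ≤ Real.arcsin (Real.cos (Real.pi / ((16:ℕ):ℝ)) / t) := by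
  apply arcsin_lower h0 h (by norm_num) (by norm_num) (by norm_num) cl16
  norm_num [St, Finset.sum_range_succ, Nat.factorial]
lemma au16_1 {t : ℝ} (h : (623410417/625000000:ℝ) ≤ t) :
    Real.arcsin (Real.cos (Real.pi / ((16:ℕ):ℝ)) / t) ≤ ((13877080230464/10000000000000):ℝ) := by
  apply arcsin_upper (by norm_num) h (by norm_num) (by norm_num) (by norm_num) cu16
  norm_num [St, Finset.sum_range_succ, Nat.factorial]

theorem stmt17 (a1 a2 : ℝ)
    (ha1 : a1 ∈ Set.Ioc (0:ℝ) (2 * Real.pi / 29)) (hK1 : K [3, 7, 29] a1 = 0)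
    (ha2 : a2 ∈ Set.Ioc (0:ℝ) (2 * Real.pi / 16)) (hK2 : K [3, 9, 16] a2 = 0) :
    a1 = ac [3, 7, 29] ∧ a2 = ac [3, 9, 16] ∧ a1 < a2 ∧
      1647 / 100000000 < K [3, 9, 16] a1 ∧ K [3, 9, 16] a1 < 1648 / 100000000 := by
  have hp := Real.pi_pos
  have hpl := Real.pi_gt_d20
  have hpu := Real.pi_lt_d20
  obtain ⟨h10, h11⟩ := ha1
  obtain ⟨h20, h21⟩ := ha2
  have ht : 0 < Real.cos (a1 / 2) := by
    apply Real.cos_pos_of_mem_Ioo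
    constructor <;> linarith
  have hK1' := hK1
  rw [K_eq] at hK1'
  have hlo : (997456667/1000000000:ℝ) ≤ Real.cos (a1 / 2) := by
    by_contra! h
    have b1 := al3_0 ht h.le
    have b2 := al7_0 ht h.le
    have b3 := al29_0 ht h.le
    norm_num at hpl hpu b1 b2 b3 hK1'
    linarith
  have hhi : Real.cos (a1 / 2) ≤ (623410417/625000000:ℝ) := by
    by_contra! h
    have b1 := au3_1 h.le
    have b2 := au7_1 h.le
    have b3 := au29_1 h.le
    norm_num at hpl hpu b1 b2 b3 hK1'
    linarith
  have hA : 1647 / 100000000 < K [3, 9, 16] a1 := by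
    have b1 := au3_0 hlo
    have b2 := au9_0 hlo
    have b3 := au16_0 hlo
    rw [K_eq]
    norm_num at hpl hpu b1 b2 b3 ⊢
    linarith
  have hB : K [3, 9, 16] a1 < 1648 / 100000000 := by
    have b1 := al3_1 ht hhi
    have b2 := al9_1 ht hhi
    have b3 := al16_1 ht hhi
    rw [K_eq]
    norm_num at hpl hpu b1 b2 b3 ⊢
    linarith
  refine ⟨ac_eq 7 29 (by norm_num) (by norm_num) h10 (by exact_mod_cast h11) hK1,
    ac_eq 9 16 (by norm_num) (by norm_num) h20 (by exact_mod_cast h21) hK2, ?_, hA, hB⟩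
  by_contra! h
  rcases h.lt_or_eq with h | h
  · have := K_anti 9 16 (by norm_num) (by norm_num) h20.le h (by linarith)
    linarith
  · rw [h] at hK2
    linarith
end

section
/- Let a₀ be the unique solution in (0, 2π/13] of K_{a}((3,11,13)) = 0, i.e. a₀ = a_c((3,11,13)). Then the total area of the three faces of a vertex of pattern (3,11,13) at side length a₀ satisfies 0.08375 < (3·β(3,a₀) − π) + (11·β(11,a₀) − 9π) + (13·β(13,a₀) − 11π) < 0.08376. -/
/-- The interior angle of the regular spherical n-gon of side length a. -/
noncomputable def beta (n : ℕ) (a : ℝ) : ℝ :=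
  2 * Real.arcsin (Real.cos (Real.pi / (n : ℝ)) / Real.cos (a / 2))

theorem s18_step (f g : ℝ → ℝ) (h : ∀ x, HasDerivAt f (g x) x) (h0 : f 0 = 0)
    (hg : ∀ x, 0 ≤ x → 0 ≤ g x) : ∀ x, 0 ≤ x → 0 ≤ f x := by
  intro x hx
  have hm : MonotoneOn f (Set.Ici 0) := by
    apply monotoneOn_of_deriv_nonneg (convex_Ici 0)
    · exact fun y _ => (h y).continuousAt.continuousWithinAt
    · exact fun y _ => (h y).differentiableAt.differentiableWithinAt
    · intro y hy
      rw [(h y).deriv]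
      exact hg y (interior_subset hy)
  have := hm (Set.mem_Ici.2 le_rfl) (Set.mem_Ici.2 hx) hx
  rwa [h0] at this

/-- From an upper bound for cos to one for sin, by integration, and so on. -/
theorem s18_taylor : ∀ x : ℝ, 0 ≤ x →
    (Real.cos x ≤ 1 - x^2/2 + x^4/24 - x^6/720 + x^8/40320 ∧
     1 - x^2/2 + x^4/24 - x^6/720 + x^8/40320 - x^10/3628800 ≤ Real.cos x ∧
     x - x^3/6 + x^5/120 - x^7/5040 ≤ Real.sin x ∧
     Real.sin x ≤ x - x^3/6 + x^5/120 - x^7/5040 + x^9/362880) := by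
  have pw : ∀ (n : ℕ) (c x : ℝ), HasDerivAt (fun x : ℝ => x^n/c) (n * x^(n-1)/c) x :=
    fun n c x => (hasDerivAt_pow n x).div_const c
  have c0 : ∀ x : ℝ, 0 ≤ x → 0 ≤ 1 - Real.cos x := fun x _ => by linarith [Real.cos_le_one x]
  have s1 := s18_step (fun x => x - Real.sin x) _
    (fun x => ((hasDerivAt_id x).sub (Real.hasDerivAt_sin x))) (by simp) c0
  have c2 := s18_step (fun x => Real.cos x - (1 - x^2/2)) (fun x => x - Real.sin x)
    (fun x => by
      refine HasDerivAt.congr_deriv ((Real.hasDerivAt_cos x).sub ((pw 2 2 x).const_sub 1)) ?_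
      norm_num
      ring) (by simp) s1
  have s3 := s18_step (fun x => Real.sin x - (x - x^3/6)) (fun x => Real.cos x - (1 - x^2/2))
    (fun x => by
      refine HasDerivAt.congr_deriv ((Real.hasDerivAt_sin x).sub ((hasDerivAt_id x).sub (pw 3 6 x))) ?_
      norm_num
      ring) (by simp) c2
  have c4 := s18_step (fun x => (1 - x^2/2 + x^4/24) - Real.cos x)
    (fun x => Real.sin x - (x - x^3/6))
    (fun x => by
      refine HasDerivAt.congr_deriv ((((pw 2 2 x).const_sub 1).add (pw 4 24 x)).sub (Real.hasDerivAt_cos x)) ?_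
      norm_num
      ring) (by simp) s3
  have s5 := s18_step (fun x => (x - x^3/6 + x^5/120) - Real.sin x)
    (fun x => (1 - x^2/2 + x^4/24) - Real.cos x)
    (fun x => by
      refine HasDerivAt.congr_deriv ((((hasDerivAt_id x).sub (pw 3 6 x)).add (pw 5 120 x)).sub
        (Real.hasDerivAt_sin x)) ?_
      norm_num
      ring) (by simp) c4
  have c6 := s18_step (fun x => Real.cos x - (1 - x^2/2 + x^4/24 - x^6/720))
    (fun x => (x - x^3/6 + x^5/120) - Real.sin x)
    (fun x => by
      refine HasDerivAt.congr_deriv ((Real.hasDerivAt_cos x).sub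
        ((((pw 2 2 x).const_sub 1).add (pw 4 24 x)).sub (pw 6 720 x))) ?_
      norm_num
      ring) (by simp) s5
  have s7 := s18_step (fun x => Real.sin x - (x - x^3/6 + x^5/120 - x^7/5040))
    (fun x => Real.cos x - (1 - x^2/2 + x^4/24 - x^6/720))
    (fun x => by
      refine HasDerivAt.congr_deriv ((Real.hasDerivAt_sin x).sub
        ((((hasDerivAt_id x).sub (pw 3 6 x)).add (pw 5 120 x)).sub (pw 7 5040 x))) ?_
      norm_num
      ring) (by simp) c6
  have c8 := s18_step (fun x => (1 - x^2/2 + x^4/24 - x^6/720 + x^8/40320) - Real.cos x)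
    (fun x => Real.sin x - (x - x^3/6 + x^5/120 - x^7/5040))
    (fun x => by
      refine HasDerivAt.congr_deriv ((((((pw 2 2 x).const_sub 1).add (pw 4 24 x)).sub (pw 6 720 x)).add
        (pw 8 40320 x)).sub (Real.hasDerivAt_cos x)) ?_
      norm_num
      ring) (by simp) s7
  have s9 := s18_step (fun x => (x - x^3/6 + x^5/120 - x^7/5040 + x^9/362880) - Real.sin x)
    (fun x => (1 - x^2/2 + x^4/24 - x^6/720 + x^8/40320) - Real.cos x)
    (fun x => by
      refine HasDerivAt.congr_deriv ((((((hasDerivAt_id x).sub (pw 3 6 x)).add (pw 5 120 x)).sub (pw 7 5040 x)).add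
        (pw 9 362880 x)).sub (Real.hasDerivAt_sin x)) ?_
      norm_num
      ring) (by simp) c8
  have c10 := s18_step
    (fun x => Real.cos x - (1 - x^2/2 + x^4/24 - x^6/720 + x^8/40320 - x^10/3628800))
    (fun x => (x - x^3/6 + x^5/120 - x^7/5040 + x^9/362880) - Real.sin x)
    (fun x => by
      refine HasDerivAt.congr_deriv ((Real.hasDerivAt_cos x).sub (((((((pw 2 2 x).const_sub 1).add (pw 4 24 x)).sub
        (pw 6 720 x)).add (pw 8 40320 x))).sub (pw 10 3628800 x))) ?_
      norm_num
      ring) (by simp) s9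
  intro x hx
  have h1 := c8 x hx
  have h2 := c10 x hx
  have h3 := s7 x hx
  have h4 := s9 x hx
  refine ⟨?_, ?_, ?_, ?_⟩ <;> linarith

theorem s18_c11 : 0.9594929735 < Real.cos (Real.pi / 11) ∧
    Real.cos (Real.pi / 11) < 0.9594929737 := by
  have p1 := Real.pi_gt_d20
  have p2 := Real.pi_lt_d20
  constructor
  · have h := (s18_taylor (3.14159265359/11) (by norm_num)).2.1
    have h2 : Real.cos (3.14159265359/11) ≤ Real.cos (Real.pi/11) :=
      Real.cos_le_cos_of_nonneg_of_le_pi (by positivity) (by linarith) (by linarith)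
    refine lt_of_lt_of_le ?_ (h.trans h2)
    norm_num
  · have h := (s18_taylor (3.14159265358/11) (by norm_num)).1
    have h2 : Real.cos (Real.pi/11) ≤ Real.cos (3.14159265358/11) :=
      Real.cos_le_cos_of_nonneg_of_le_pi (by norm_num) (by linarith) (by linarith)
    refine lt_of_le_of_lt (h2.trans h) ?_
    norm_num

theorem s18_c13 : 0.9709418173 < Real.cos (Real.pi / 13) ∧
    Real.cos (Real.pi / 13) < 0.9709418175 := by
  have p1 := Real.pi_gt_d20
  have p2 := Real.pi_lt_d20
  constructor
  · have h := (s18_taylor (3.14159265359/13) (by norm_num)).2.1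
    have h2 : Real.cos (3.14159265359/13) ≤ Real.cos (Real.pi/13) :=
      Real.cos_le_cos_of_nonneg_of_le_pi (by positivity) (by linarith) (by linarith)
    refine lt_of_lt_of_le ?_ (h.trans h2)
    norm_num
  · have h := (s18_taylor (3.14159265358/13) (by norm_num)).1
    have h2 : Real.cos (Real.pi/13) ≤ Real.cos (3.14159265358/13) :=
      Real.cos_le_cos_of_nonneg_of_le_pi (by norm_num) (by linarith) (by linarith)
    refine lt_of_le_of_lt (h2.trans h) ?_
    norm_num

/-- Law of cosines estimates for the triangle with sides 1/2, c, d. -/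
theorem s18_box (c d x y : ℝ) (c1 : 0.9594929735 < c) (c2 : c < 0.9594929737)
    (d1 : 0.9709418173 < d) (d2 : d < 0.9709418175)
    (hx : 2 * (c * d) * x = c^2 + d^2 - 1/4) (hy : d * y = 1/4 + d^2 - c^2) :
    0.865894295 < x ∧ x < 0.865894299 ∧ 0.280244643 < y ∧ y < 0.280244650 := by
  have m1 : 0.9594929735 * 0.9709418173 < c * d := by nlinarith
  have m2 : c * d < 0.9594929737 * 0.9709418175 := by nlinarith
  have e1 : (0.0114488436:ℝ)^2 < (d - c)^2 := by nlinarith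
  have e2 : (d - c)^2 < (0.0114488440:ℝ)^2 := by nlinarith
  have f1 : (0.9594929735:ℝ)^2 < c^2 := by nlinarith
  have f2 : c^2 < (0.9594929737:ℝ)^2 := by nlinarith
  have g1 : (0.9709418173:ℝ)^2 < d^2 := by nlinarith
  have g2 : d^2 < (0.9709418175:ℝ)^2 := by nlinarith
  have hx' : 2 * (c * d) * (1 - x) = 1/4 - (d - c)^2 := by nlinarith
  refine ⟨?_, ?_, ?_, ?_⟩ <;> by_contra h <;> push Not at h <;> nlinarith

theorem s18_angles (A B : ℝ) (hA0 : 0 ≤ A) (hA : A ≤ Real.pi / 2) (hB0 : 0 ≤ B)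
    (hB : B ≤ Real.pi / 2)
    (x1 : 0.865894295 < Real.cos A) (x2 : Real.cos A < 0.865894299)
    (y1 : 0.280244643 < Real.cos B) (y2 : Real.cos B < 0.280244650) :
    0.52386091 < A ∧ A < 0.52386095 ∧ 0.28404892 < Real.pi/2 - B ∧
      Real.pi/2 - B < 0.284049 := by
  have p1 := Real.pi_gt_d20
  rw [← Real.sin_pi_div_two_sub] at y1 y2
  refine ⟨?_, ?_, ?_, ?_⟩ <;> by_contra h <;> push Not at h
  · have h2 := Real.cos_le_cos_of_nonneg_of_le_pi hA0 (by linarith) h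
    have := (s18_taylor 0.52386091 (by norm_num)).2.1
    norm_num at this x2 h2
    linarith
  · have h2 := Real.cos_le_cos_of_nonneg_of_le_pi (by norm_num) (by linarith) h
    have := (s18_taylor 0.52386095 (by norm_num)).1
    norm_num at this x1 h2
    linarith
  · have h2 := Real.sin_le_sin_of_le_of_le_pi_div_two (by linarith) (by linarith) h
    have := (s18_taylor 0.28404892 (by norm_num)).2.2.2
    norm_num at this y1 h2
    linarith
  · have h2 := Real.sin_le_sin_of_le_of_le_pi_div_two (by linarith) (by linarith) h
    have := (s18_taylor 0.284049 (by norm_num)).2.2.1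
    norm_num at this y2 h2
    linarith

/-- The area estimate, for the three half-angles. -/
theorem s18_area (C : ℝ) (hC : Real.cos (Real.pi / 13) ≤ C)
    (hs : Real.arcsin (1 / 2 / C) + Real.arcsin (Real.cos (Real.pi / 11) / C) +
      Real.arcsin (Real.cos (Real.pi / 13) / C) = Real.pi) :
    8375 / 100000 < 6 * Real.arcsin (1 / 2 / C) + 22 * Real.arcsin (Real.cos (Real.pi / 11) / C) +
      26 * Real.arcsin (Real.cos (Real.pi / 13) / C) - 21 * Real.pi ∧
    6 * Real.arcsin (1 / 2 / C) + 22 * Real.arcsin (Real.cos (Real.pi / 11) / C) +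
      26 * Real.arcsin (Real.cos (Real.pi / 13) / C) - 21 * Real.pi < 8376 / 100000 := by
  obtain ⟨c1, c2⟩ := s18_c11
  obtain ⟨d1, d2⟩ := s18_c13
  set c := Real.cos (Real.pi / 11)
  set d := Real.cos (Real.pi / 13)
  have hC0 : 0 < C := by linarith
  have rng : ∀ u : ℝ, 0 ≤ u → u ≤ C → 0 ≤ u / C ∧ u / C ≤ 1 := fun u h0 h1 =>
    ⟨div_nonneg h0 hC0.le, (div_le_one hC0).2 h1⟩
  obtain ⟨a1, a2⟩ := rng (1/2) (by norm_num) (by linarith)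
  obtain ⟨b1, b2⟩ := rng c (by linarith) (by linarith)
  obtain ⟨e1, e2⟩ := rng d (by linarith) (by linarith)
  have sA := Real.sin_arcsin (by linarith) a2
  have sB := Real.sin_arcsin (by linarith) b2
  have sD := Real.sin_arcsin (by linarith) e2
  have A0 := Real.arcsin_nonneg.2 a1
  have B0 := Real.arcsin_nonneg.2 b1
  have A1 := Real.arcsin_le_pi_div_two (1/2/C)
  have B1 := Real.arcsin_le_pi_div_two (c/C)
  set A := Real.arcsin (1/2/C)
  set B := Real.arcsin (c/C)
  set D := Real.arcsin (d/C)
  have q1 : d = 1/2 * Real.cos B + Real.cos A * c := by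
    have h : Real.sin D = Real.sin (A + B) := by
      rw [← Real.sin_pi_sub]; congr 1; linarith
    rw [Real.sin_add, sA, sB, sD] at h
    field_simp at h
    linarith
  have q2 : c = 1/2 * Real.cos D + Real.cos A * d := by
    have h : Real.sin B = Real.sin (A + D) := by
      rw [← Real.sin_pi_sub]; congr 1; linarith
    rw [Real.sin_add, sA, sB, sD] at h
    field_simp at h
    linarith
  have q3 : 1/2 = c * Real.cos D + Real.cos B * d := by
    have h : Real.sin A = Real.sin (B + D) := by
      rw [← Real.sin_pi_sub]; congr 1; linarith
    rw [Real.sin_add, sA, sB, sD] at h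
    field_simp at h
    linarith
  obtain ⟨x1, x2, y1, y2⟩ := s18_box c d (Real.cos A) (Real.cos B) c1 c2 d1 d2
    (by linear_combination (-d) * q1 - c * q2 + (1/2) * q3)
    (by linear_combination (-d) * q1 + c * q2 - (1/2) * q3)
  obtain ⟨r1, r2, r3, r4⟩ := s18_angles A B A0 A1 B0 B1 x1 x2 y1 y2
  have p1 := Real.pi_gt_d20
  have p2 := Real.pi_lt_d20
  have hD : D = Real.pi - A - B := by linarith
  rw [hD]
  constructor <;> linarith

theorem s18_K (a : ℝ) : K [3, 11, 13] a = 2 * Real.pi -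
    2 * (Real.arcsin (1 / 2 / Real.cos (a/2)) + Real.arcsin (Real.cos (Real.pi / 11) / Real.cos (a/2)) +
      Real.arcsin (Real.cos (Real.pi / 13) / Real.cos (a/2))) := by
  have h : K [3, 11, 13] a = 2 * Real.pi -
      (2 * Real.arcsin (Real.cos (Real.pi / ((3:ℕ):ℝ)) / Real.cos (a / 2)) +
        (2 * Real.arcsin (Real.cos (Real.pi / ((11:ℕ):ℝ)) / Real.cos (a / 2)) +
        (2 * Real.arcsin (Real.cos (Real.pi / ((13:ℕ):ℝ)) / Real.cos (a / 2)) + 0))) := rfl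
  rw [h]
  push_cast
  rw [Real.cos_pi_div_three]
  ring

/-- Let a₀ be the unique solution in (0, 2π/13] of K_a((3,11,13)) = 0, i.e.
a₀ = a_c((3,11,13)).  Then the total area of the three faces of a vertex of pattern
(3,11,13) at side length a₀ satisfies
0.08375 < (3β(3,a₀) − π) + (11β(11,a₀) − 9π) + (13β(13,a₀) − 11π) < 0.08376. -/
theorem stmt18 (a0 : ℝ)
    (ha0 : a0 ∈ Set.Ioc (0:ℝ) (2 * Real.pi / 13)) (hK : K [3, 11, 13] a0 = 0) :
    a0 = ac [3, 11, 13] ∧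
    8375 / 100000 <
      (3 * beta 3 a0 - Real.pi) + (11 * beta 11 a0 - 9 * Real.pi) +
        (13 * beta 13 a0 - 11 * Real.pi) ∧
    (3 * beta 3 a0 - Real.pi) + (11 * beta 11 a0 - 9 * Real.pi) +
        (13 * beta 13 a0 - 11 * Real.pi) < 8376 / 100000 := by
  obtain ⟨h0, h1⟩ := ha0
  have pp := Real.pi_pos
  have hc : ∀ a : ℝ, 0 ≤ a → a ≤ 2 * Real.pi / 13 →
      Real.cos (Real.pi / 13) ≤ Real.cos (a / 2) := fun a g0 g1 =>
    Real.cos_le_cos_of_nonneg_of_le_pi (by linarith) (by linarith) (by linarith)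
  have c1 := s18_c11.1
  have d1 := s18_c13.1
  refine ⟨?_, ?_⟩
  · symm
    apply IsGreatest.csSup_eq
    refine ⟨⟨⟨h0.le, ?_⟩, hK.ge⟩, ?_⟩
    · simpa using h1
    · rintro a ⟨⟨g0, g1⟩, g2⟩
      replace g1 : a ≤ 2 * Real.pi / 13 := by simpa using g1
      by_contra hlt
      push Not at hlt
      have hC := hc a g0 g1
      have hC0 : 0 < Real.cos (a/2) := by linarith
      have hlt' : Real.cos (a/2) < Real.cos (a0/2) :=
        Real.cos_lt_cos_of_nonneg_of_le_pi (by linarith) (by linarith) (by linarith)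
      have mono : ∀ u : ℝ, 0 ≤ u →
          Real.arcsin (u / Real.cos (a0/2)) ≤ Real.arcsin (u / Real.cos (a/2)) := fun u hu =>
        Real.monotone_arcsin (div_le_div_of_nonneg_left hu hC0 hlt'.le)
      have m1 := mono (1/2) (by norm_num)
      have m2 := mono (Real.cos (Real.pi/11)) (by linarith)
      have hd0 : 0 < Real.cos (Real.pi/13) := by linarith
      have m3 : Real.arcsin (Real.cos (Real.pi/13) / Real.cos (a0/2)) <
          Real.arcsin (Real.cos (Real.pi/13) / Real.cos (a/2)) := by
        apply Real.arcsin_lt_arcsin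
        · have : 0 ≤ Real.cos (Real.pi/13) / Real.cos (a0/2) :=
            div_nonneg hd0.le (by linarith)
          linarith
        · exact div_lt_div_of_pos_left hd0 hC0 hlt'
        · exact (div_le_one hC0).2 hC
      rw [s18_K] at hK g2
      linarith
  · rw [s18_K] at hK
    have := s18_area (Real.cos (a0/2)) (hc a0 h0.le h1) (by linarith)
    simp only [beta]
    push_cast
    rw [Real.cos_pi_div_three]
    constructor <;> linarith [this.1, this.2]
end
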